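/- Let D ⊆ ℝ² be the closed unit disk centered at the origin, and let X ⊆ ℝ² be a compact convex set with perimeter ℓ(∂X) = 2π that is not a closed disk (i.e., X is not equal to any closed ball in ℝ²). Then there exists ε > 0 such that for all l with 0 < l < ε, the Buffon probabilities satisfy P_X(l) < P_D(l). -/

import Mathlib

/-!
For a planar convex body `X` of area `A` and perimeter `ℓ`, the points from which the needle of
length `l` in a given direction leaves `X` form a region of area `l * w + O(l ^ 2)`, where `w` is
the width of `X` perpendicular to that direction. Averaging over all directions turns the width into
the perimeter, by Cauchy's formula, and gives `P_X(l) = 1 - l * ℓ / (π * A) + O(l ^ 2)`. At fixed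
perimeter the linear coefficient is governed by the area, so the strict isoperimetric inequality
settles the comparison for short needles.

The perimeter enters as the integral `L` of the support function. It is at most the Hausdorff
measure of the boundary, by approximation with inscribed polygons. The inequality
`4 * π * A < L ^ 2` is Hurwitz's Fourier series argument in a form that does not differentiate the
support function: the area of the circumscribed equiangular `n`-gons, averaged over rotations,
is an explicit quadratic form in the Fourier coefficients, and `n` tends to infinity.
-/

open MeasureTheory Metric Set Real Pointwise
open scoped ENNReal RealInnerProductSpace

noncomputable section

/-- The Euclidean plane. -/
abbrev Plane := EuclideanSpace ℝ (Fin 2)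

/-- The unit vector in the plane making angle `θ` with the horizontal axis. -/
def needleDir (θ : ℝ) : Plane :=
  (EuclideanSpace.equiv (Fin 2) ℝ).symm ![Real.cos θ, Real.sin θ]

/-- The set of directions `θ ∈ [0, 2π)` for which the needle of length `l`
originating at `x` has its other endpoint in `X`. -/
def needleAngles (X : Set Plane) (l : ℝ) (x : Plane) : Set ℝ :=
  {θ ∈ Set.Ico 0 (2 * π) | x + l • needleDir θ ∈ X}

/-- The pointwise probability `p_X(x, l)` that a random needle of length `l` at `x`
lies within `X`. -/
def pointwiseProb (X : Set Plane) (x : Plane) (l : ℝ) : ℝ :=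
  (1 / (2 * π)) * (volume (needleAngles X l x)).toReal

/-- The Buffon probability `P_X(l)` that a random needle of length `l` originating at a
uniformly chosen point of `X` lies within `X`; taken to be `0` when `X` has zero area. -/
def buffonProb (X : Set Plane) (l : ℝ) : ℝ :=
  if volume X = 0 then 0
  else (1 / (2 * π * (volume X).toReal)) *
    ∫ x in X, (volume (needleAngles X l x)).toReal

/-- The interior parallel `X_r`: the Minkowski difference of `X` with the closed ball
of radius `r`. -/
def innerParallel (X : Set Plane) (r : ℝ) : Set Plane :=
  {x : Plane | Metric.closedBall x r ⊆ X}

/-- The exterior parallel `X^r`: the Minkowski sum of `X` with the closed ball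
of radius `r`. -/
def exterParallel (X : Set Plane) (r : ℝ) : Set Plane :=
  X + Metric.closedBall (0 : Plane) r

end

/-! ### Directions and rotated frames -/

section Direction

@[simp] lemma needleDir_apply_zero (θ : ℝ) : needleDir θ 0 = Real.cos θ := rfl

@[simp] lemma needleDir_apply_one (θ : ℝ) : needleDir θ 1 = Real.sin θ := rfl

lemma inner_needleDir_right (x : Plane) (θ : ℝ) :
    ⟪x, needleDir θ⟫ = x 0 * Real.cos θ + x 1 * Real.sin θ := by
  simp [PiLp.inner_apply, Fin.sum_univ_two, mul_comm]

lemma inner_needleDir (θ φ : ℝ) : ⟪needleDir θ, needleDir φ⟫ = Real.cos (θ - φ) := by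
  rw [inner_needleDir_right, Real.cos_sub, needleDir_apply_zero, needleDir_apply_one]

@[simp] lemma norm_needleDir (θ : ℝ) : ‖needleDir θ‖ = 1 := by
  rw [norm_eq_sqrt_real_inner, inner_needleDir, sub_self, Real.cos_zero, Real.sqrt_one]

@[fun_prop] lemma continuous_needleDir : Continuous needleDir := by
  unfold needleDir
  fun_prop

lemma needleDir_periodic : Function.Periodic needleDir (2 * π) := fun θ => by
  simp [needleDir]

lemma needleDir_add_pi (θ : ℝ) : needleDir (θ + π) = -needleDir θ := by
  ext i; fin_cases i <;> simp

lemma inner_needleDir_add (x : Plane) (θ δ : ℝ) : ⟪x, needleDir (θ + δ)⟫ =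
    ⟪x, needleDir θ⟫ * Real.cos δ + ⟪x, needleDir (θ + π / 2)⟫ * Real.sin δ := by
  simp only [inner_needleDir_right, Real.cos_add, Real.sin_add, Real.cos_pi_div_two,
    Real.sin_pi_div_two]
  ring

lemma inner_needleDir_sub (x : Plane) (θ δ : ℝ) : ⟪x, needleDir (θ - δ)⟫ =
    ⟪x, needleDir θ⟫ * Real.cos δ - ⟪x, needleDir (θ + π / 2)⟫ * Real.sin δ := by
  rw [sub_eq_add_neg, inner_needleDir_add, Real.cos_neg, Real.sin_neg, mul_neg, ← sub_eq_add_neg]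

lemma exists_eq_norm_smul_needleDir (v : Plane) : ∃ θ : ℝ, v = ‖v‖ • needleDir θ := by
  have hnorm : ‖v‖ = ‖(⟨v 0, v 1⟩ : ℂ)‖ := by
    simp [EuclideanSpace.norm_eq, Complex.norm_def, Complex.normSq_mk, Fin.sum_univ_two, sq]
  refine ⟨Complex.arg ⟨v 0, v 1⟩, ?_⟩
  rw [hnorm]
  ext i
  fin_cases i
  · simp [Complex.norm_mul_cos_arg]
  · simp [Complex.norm_mul_sin_arg]

lemma exists_forall_inner_needleDir_eq_norm_mul_cos (v : Plane) :
    ∃ ψ : ℝ, ∀ θ, ⟪v, needleDir θ⟫ = ‖v‖ * Real.cos (ψ - θ) := by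
  obtain ⟨ψ, hψ⟩ := exists_eq_norm_smul_needleDir v
  refine ⟨ψ, fun θ => ?_⟩
  rw [← inner_needleDir, ← real_inner_smul_left, ← hψ]

/-- The point with coordinates `p` in the positively oriented orthonormal frame whose first vector
is `needleDir θ`. -/
noncomputable def rotatedFrame (θ : ℝ) (p : ℝ × ℝ) : Plane :=
  p.1 • needleDir θ + p.2 • needleDir (θ + π / 2)

@[fun_prop] lemma continuous_rotatedFrame (θ : ℝ) : Continuous (rotatedFrame θ) := by
  unfold rotatedFrame
  fun_prop

lemma orthonormal_needleDir (θ : ℝ) :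
    Orthonormal ℝ ![needleDir θ, needleDir (θ + π / 2)] := by
  rw [orthonormal_iff_ite]
  intro i j
  fin_cases i <;> fin_cases j <;> simp [inner_needleDir]

lemma measurePreserving_rotatedFrame (θ : ℝ) : MeasurePreserving (rotatedFrame θ) := by
  have hon := orthonormal_needleDir θ
  have hspan := hon.linearIndependent.span_eq_top_of_card_eq_finrank (by simp)
  let b : OrthonormalBasis (Fin 2) ℝ Plane := OrthonormalBasis.mk hon hspan.ge
  have hframe : rotatedFrame θ =
      b.repr.symm ∘ (WithLp.toLp 2) ∘ (MeasurableEquiv.finTwoArrow (α := ℝ)).symm := by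
    funext p
    simp only [Function.comp_apply]
    rw [← OrthonormalBasis.sum_repr_symm]
    simp [rotatedFrame, b, Fin.sum_univ_two]
  rw [hframe]
  exact b.measurePreserving_repr_symm.comp
    ((PiLp.volume_preserving_toLp (Fin 2)).comp (volume_preserving_finTwoArrow ℝ).symm)

lemma volume_eq_lintegral_rotatedFrame (θ : ℝ) {S : Set Plane} (hS : MeasurableSet S) :
    volume S = ∫⁻ s, volume {t : ℝ | rotatedFrame θ (s, t) ∈ S} := by
  rw [← (measurePreserving_rotatedFrame θ).measure_preimage hS.nullMeasurableSet,
    Measure.volume_eq_prod,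
    Measure.prod_apply ((continuous_rotatedFrame θ).measurable hS)]
  rfl

lemma inner_rotatedFrame (θ φ : ℝ) (p : ℝ × ℝ) :
    ⟪rotatedFrame θ p, needleDir φ⟫ = p.1 * Real.cos (θ - φ) - p.2 * Real.sin (θ - φ) := by
  rw [rotatedFrame, inner_add_left, real_inner_smul_left, real_inner_smul_left, inner_needleDir,
    inner_needleDir, add_sub_right_comm, Real.cos_add_pi_div_two, mul_neg, ← sub_eq_add_neg]

lemma rotatedFrame_inner (θ : ℝ) (x : Plane) :
    rotatedFrame θ (⟪x, needleDir θ⟫, ⟪x, needleDir (θ + π / 2)⟫) = x := by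
  have hsq := Real.sin_sq_add_cos_sq θ
  ext i; fin_cases i
  · simp only [rotatedFrame, inner_needleDir_right, Real.cos_add_pi_div_two,
      Real.sin_add_pi_div_two, PiLp.add_apply, PiLp.smul_apply, smul_eq_mul, needleDir_apply_zero,
      Fin.zero_eta]
    linear_combination (x 0) * hsq
  · simp only [rotatedFrame, inner_needleDir_right, Real.cos_add_pi_div_two,
      Real.sin_add_pi_div_two, PiLp.add_apply, PiLp.smul_apply, smul_eq_mul, needleDir_apply_one,
      Fin.mk_one]
    linear_combination (x 1) * hsq

end Direction

/-! ### Integrals over a period -/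

section Periodic

variable {E : Type*} [NormedAddCommGroup E] [NormedSpace ℝ E] {f : ℝ → E} {T : ℝ}

lemma intervalIntegral_comp_add_right_of_periodic (hf : Function.Periodic f T) (c : ℝ) :
    ∫ θ in (0)..T, f (θ + c) = ∫ θ in (0)..T, f θ := by
  rw [intervalIntegral.integral_comp_add_right, zero_add, add_comm T,
    hf.intervalIntegral_add_eq c 0, zero_add]

lemma intervalIntegral_comp_sub_right_of_periodic (hf : Function.Periodic f T) (c : ℝ) :
    ∫ θ in (0)..T, f (θ - c) = ∫ θ in (0)..T, f θ :=
  intervalIntegral_comp_add_right_of_periodic hf (-c)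

end Periodic

lemma integral_inner_needleDir (v : Plane) : ∫ θ in (0)..(2 * π), ⟪v, needleDir θ⟫ = 0 := by
  have hshift := intervalIntegral_comp_add_right_of_periodic
    (f := fun θ => ⟪v, needleDir θ⟫) (needleDir_periodic.comp _) π
  simp only [needleDir_add_pi, inner_neg_right, intervalIntegral.integral_neg] at hshift
  linarith

/-! ### Support functions -/

section Support

variable {X : Set Plane}

/-- The support function of `X`, evaluated at the unit vector of angle `θ`. -/
noncomputable def supportFun (X : Set Plane) (θ : ℝ) : ℝ :=
  sSup ((fun x => ⟪x, needleDir θ⟫) '' X)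

lemma inner_le_supportFun (hX : IsCompact X) {x : Plane} (hx : x ∈ X) (θ : ℝ) :
    ⟪x, needleDir θ⟫ ≤ supportFun X θ :=
  le_csSup (hX.image (by fun_prop)).bddAbove (mem_image_of_mem _ hx)

lemma exists_inner_eq_supportFun (hX : IsCompact X) (hne : X.Nonempty) (θ : ℝ) :
    ∃ x ∈ X, ⟪x, needleDir θ⟫ = supportFun X θ :=
  (hX.image (f := fun x => ⟪x, needleDir θ⟫) (by fun_prop)).sSup_mem (hne.image _)

lemma supportFun_periodic (X : Set Plane) : Function.Periodic (supportFun X) (2 * π) := fun θ => by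
  simp only [supportFun, needleDir_periodic θ]

lemma continuous_supportFun (hX : IsCompact X) : Continuous (supportFun X) :=
  hX.continuous_sSup (f := fun θ x => ⟪x, needleDir θ⟫) (by fun_prop)

lemma supportFun_pos (hX : IsCompact X) (h0 : X ∈ nhds 0) (θ : ℝ) : 0 < supportFun X θ := by
  obtain ⟨r, hr, hball⟩ := Metric.nhds_basis_closedBall.mem_iff.1 h0
  have hmem : r • needleDir θ ∈ X := hball (by simp [norm_smul, abs_of_pos hr])
  have hle := inner_le_supportFun hX hmem θ
  rw [real_inner_smul_left, inner_needleDir, sub_self, Real.cos_zero, mul_one] at hle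
  exact hr.trans_le hle

lemma two_mul_cos_mul_supportFun_le (hX : IsCompact X) (θ δ : ℝ) :
    2 * Real.cos δ * supportFun X θ ≤ supportFun X (θ + δ) + supportFun X (θ - δ) := by
  rcases X.eq_empty_or_nonempty with rfl | hne
  · simp [supportFun]
  obtain ⟨x, hx, hxθ⟩ := exists_inner_eq_supportFun hX hne θ
  have hadd := inner_le_supportFun hX hx (θ + δ)
  have hsub := inner_le_supportFun hX hx (θ - δ)
  rw [inner_needleDir_add] at hadd
  rw [inner_needleDir_sub] at hsub
  rw [← hxθ]
  linarith

lemma mem_iff_forall_inner_le_supportFun (hX : IsCompact X) (hconv : Convex ℝ X)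
    (hne : X.Nonempty) {y : Plane} : y ∈ X ↔ ∀ θ, ⟪y, needleDir θ⟫ ≤ supportFun X θ := by
  refine ⟨inner_le_supportFun hX, fun hy => ?_⟩
  by_contra hyX
  obtain ⟨f, c, hfX, hfy⟩ := geometric_hahn_banach_closed_point hconv hX.isClosed hyX
  obtain ⟨θ, hθ⟩ := exists_eq_norm_smul_needleDir ((InnerProductSpace.toDual ℝ Plane).symm f)
  have hf : ∀ x, f x = ‖(InnerProductSpace.toDual ℝ Plane).symm f‖ * ⟪x, needleDir θ⟫ := fun x => by
    rw [← real_inner_smul_right, ← hθ, real_inner_comm, InnerProductSpace.toDual_symm_apply]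
  obtain ⟨x, hx, hxθ⟩ := exists_inner_eq_supportFun hX hne θ
  have hfx := hfX x hx
  rw [hf, hxθ] at hfx
  rw [hf] at hfy
  exact (hfx.trans hfy).not_ge (mul_le_mul_of_nonneg_left (hy θ) (norm_nonneg _))

lemma norm_le_iff_forall_inner_needleDir_le {v : Plane} {R : ℝ} :
    ‖v‖ ≤ R ↔ ∀ θ, ⟪v, needleDir θ⟫ ≤ R := by
  refine ⟨fun h θ => ?_, fun h => ?_⟩
  · simpa using (real_inner_le_norm v (needleDir θ)).trans (by simpa using h)
  · obtain ⟨ψ, hψ⟩ := exists_forall_inner_needleDir_eq_norm_mul_cos v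
    simpa [hψ] using h ψ

lemma supportFun_closedBall (c : Plane) {R : ℝ} (hR : 0 ≤ R) (θ : ℝ) :
    supportFun (closedBall c R) θ = ⟪c, needleDir θ⟫ + R := by
  refine IsGreatest.csSup_eq ⟨⟨c + R • needleDir θ, ?_, ?_⟩, ?_⟩
  · simp [norm_smul, abs_of_nonneg hR]
  · simp [inner_add_left, real_inner_smul_left]
  · rintro _ ⟨x, hx, rfl⟩
    have hle := norm_le_iff_forall_inner_needleDir_le.1 (mem_closedBall_iff_norm.1 hx) θ
    rw [inner_sub_left] at hle
    simp only
    linarith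

lemma eq_closedBall_of_supportFun_eq (hX : IsCompact X) (hconv : Convex ℝ X)
    (hne : X.Nonempty) {c : Plane} {R : ℝ} (h : ∀ θ, supportFun X θ = ⟪c, needleDir θ⟫ + R) :
    X = closedBall c R := by
  ext y
  simp_rw [mem_iff_forall_inner_le_supportFun hX hconv hne, mem_closedBall_iff_norm,
    norm_le_iff_forall_inner_needleDir_le, h, inner_sub_left, sub_le_iff_le_add']

lemma supportFun_vadd (hX : IsCompact X) (hne : X.Nonempty) (c : Plane) (θ : ℝ) :
    supportFun (c +ᵥ X) θ = ⟪c, needleDir θ⟫ + supportFun X θ := by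
  obtain ⟨x, hx, hxθ⟩ := exists_inner_eq_supportFun hX hne θ
  refine IsGreatest.csSup_eq ⟨⟨c +ᵥ x, vadd_mem_vadd_set hx, ?_⟩, ?_⟩
  · simp [inner_add_left, hxθ]
  · rintro _ ⟨_, ⟨y, hy, rfl⟩, rfl⟩
    simpa [inner_add_left] using inner_le_supportFun hX hy θ

/-- The perimeter of a convex body as given by Cauchy's formula: the integral of its support
function over all directions. -/
noncomputable def cauchyPerimeter (X : Set Plane) : ℝ :=
  ∫ θ in (0)..(2 * π), supportFun X θ

/-- The width of `X` in the direction of angle `θ`, that is, the length of the orthogonal projection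
of `X` to a line in that direction. -/
noncomputable def width (X : Set Plane) (θ : ℝ) : ℝ :=
  supportFun X θ + supportFun X (θ + π)

lemma continuous_width (hX : IsCompact X) : Continuous (width X) :=
  (continuous_supportFun hX).add ((continuous_supportFun hX).comp (by fun_prop))

lemma width_nonneg (hX : IsCompact X) (θ : ℝ) : 0 ≤ width X θ := by
  rcases X.eq_empty_or_nonempty with rfl | ⟨x, hx⟩
  · simp [width, supportFun]
  have hright := inner_le_supportFun hX hx θ
  have hleft := inner_le_supportFun hX hx (θ + π)
  rw [needleDir_add_pi, inner_neg_right] at hleft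
  rw [width]
  linarith

lemma integral_width (hX : IsCompact X) :
    ∫ θ in (0)..(2 * π), width X θ = 2 * cauchyPerimeter X := by
  have hcont := continuous_supportFun hX
  simp only [width]
  rw [intervalIntegral.integral_add (hcont.intervalIntegrable _ _)
      (Continuous.intervalIntegrable (by fun_prop) _ _),
    intervalIntegral_comp_add_right_of_periodic (supportFun_periodic X), ← two_mul]
  rfl

lemma cauchyPerimeter_nonneg (hX : IsCompact X) : 0 ≤ cauchyPerimeter X := by
  have hmean := intervalIntegral.integral_nonneg (μ := volume) Real.two_pi_pos.le
    fun θ _ => width_nonneg hX θ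
  rw [integral_width hX] at hmean
  linarith

lemma cauchyPerimeter_vadd (hX : IsCompact X) (hne : X.Nonempty) (c : Plane) :
    cauchyPerimeter (c +ᵥ X) = cauchyPerimeter X := by
  have hcont := continuous_supportFun hX
  simp only [cauchyPerimeter, supportFun_vadd hX hne]
  rw [intervalIntegral.integral_add (Continuous.intervalIntegrable (by fun_prop) _ _)
    (hcont.intervalIntegrable _ _), integral_inner_needleDir, zero_add]

lemma cauchyPerimeter_closedBall (c : Plane) {R : ℝ} (hR : 0 ≤ R) :
    cauchyPerimeter (closedBall c R) = 2 * π * R := by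
  simp only [cauchyPerimeter, supportFun_closedBall c hR]
  rw [intervalIntegral.integral_add (Continuous.intervalIntegrable (by fun_prop) _ _)
    intervalIntegrable_const, integral_inner_needleDir, intervalIntegral.integral_const]
  simp

end Support

/-! ### Area of circumscribed polygons -/

section Area

variable {X : Set Plane}

lemma volume_triangle (θ : ℝ) {h α β : ℝ} (hh : 0 ≤ h) (hαβ : α ≤ β) :
    volume {x : Plane | ⟪x, needleDir θ⟫ ∈ Icc 0 h ∧
      ⟪x, needleDir (θ + π / 2)⟫ ∈ Icc (α * ⟪x, needleDir θ⟫) (β * ⟪x, needleDir θ⟫)} =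
      ENNReal.ofReal ((β - α) * h ^ 2 / 2) := by
  have hclosed : IsClosed {x : Plane | ⟪x, needleDir θ⟫ ∈ Icc 0 h ∧
      ⟪x, needleDir (θ + π / 2)⟫ ∈ Icc (α * ⟪x, needleDir θ⟫) (β * ⟪x, needleDir θ⟫)} := by
    simp only [mem_Icc]
    refine (IsClosed.and ?_ ?_).and (IsClosed.and ?_ ?_) <;>
    exact isClosed_le (by fun_prop) (by fun_prop)
  have hfiber : ∀ s : ℝ, volume {t : ℝ | s ∈ Icc 0 h ∧ t ∈ Icc (α * s) (β * s)} =
      (Icc 0 h).indicator (fun s => ENNReal.ofReal ((β - α) * s)) s := fun s => by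
    by_cases hs : s ∈ Icc 0 h
    · simp only [hs, true_and, ofPred_mem_eq, Real.volume_Icc, indicator_of_mem hs, sub_mul]
    · simp [hs]
  rw [volume_eq_lintegral_rotatedFrame θ hclosed.measurableSet]
  simp only [mem_ofPred_eq, inner_rotatedFrame, sub_self, sub_add_cancel_left, Real.cos_zero,
    Real.sin_zero, Real.cos_neg, Real.sin_neg, Real.cos_pi_div_two, Real.sin_pi_div_two, mul_zero,
    mul_one, sub_zero, mul_neg, zero_sub, neg_neg, hfiber]
  rw [lintegral_indicator measurableSet_Icc, ← ofReal_integral_eq_lintegral_ofReal,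
    integral_Icc_eq_integral_Ioc, ← intervalIntegral.integral_of_le hh,
    intervalIntegral.integral_const_mul, integral_id]
  · congr 1
    ring
  · exact Continuous.integrableOn_Icc (by fun_prop)
  · exact (ae_restrict_mem measurableSet_Icc).mono fun s hs =>
      mul_nonneg (sub_nonneg.2 hαβ) hs.1

/-- Let a polygon have its sides at signed distances `H φ` from the origin, with outer normals at
angles `φ` spaced by `δ`. This is the triangle spanned by the origin and the side with outer normal
at angle `φ`. -/
def sideTriangle (H : ℝ → ℝ) (δ φ : ℝ) : Set Plane :=
  {x | ⟪x, needleDir φ⟫ ∈ Icc 0 (H φ) ∧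
    ⟪x, needleDir (φ + δ)⟫ / H (φ + δ) ≤ ⟪x, needleDir φ⟫ / H φ ∧
    ⟪x, needleDir (φ - δ)⟫ / H (φ - δ) ≤ ⟪x, needleDir φ⟫ / H φ}

/-- The area of `sideTriangle H δ φ`. -/
noncomputable def sideTriangleArea (H : ℝ → ℝ) (δ φ : ℝ) : ℝ :=
  H φ * (H (φ + δ) + H (φ - δ) - 2 * Real.cos δ * H φ) / (2 * Real.sin δ)

lemma volume_sideTriangle {H : ℝ → ℝ} (hpos : ∀ φ, 0 < H φ) {δ φ : ℝ} (hδ : 0 < Real.sin δ)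
    (hH : 2 * Real.cos δ * H φ ≤ H (φ + δ) + H (φ - δ)) :
    volume (sideTriangle H δ φ) = ENNReal.ofReal (sideTriangleArea H δ φ) := by
  have hφ := hpos φ
  have hslope : (H (φ + δ) / H φ - Real.cos δ) / Real.sin δ -
      -((H (φ - δ) / H φ - Real.cos δ) / Real.sin δ) =
      (H (φ + δ) + H (φ - δ) - 2 * Real.cos δ * H φ) / (H φ * Real.sin δ) := by
    field_simp
    ring
  have hset : sideTriangle H δ φ = {x : Plane | ⟪x, needleDir φ⟫ ∈ Icc 0 (H φ) ∧
      ⟪x, needleDir (φ + π / 2)⟫ ∈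
        Icc (-((H (φ - δ) / H φ - Real.cos δ) / Real.sin δ) * ⟪x, needleDir φ⟫)
          ((H (φ + δ) / H φ - Real.cos δ) / Real.sin δ * ⟪x, needleDir φ⟫)} := by
    ext x
    refine and_congr_right fun _ => and_comm.trans (and_congr ?_ ?_)
    · rw [div_le_iff₀ (hpos _), inner_needleDir_sub, neg_mul,
        div_mul_eq_mul_div (H (φ - δ) / H φ - Real.cos δ), ← neg_div, div_le_iff₀ hδ, sub_mul,
        div_mul_eq_mul_div, div_mul_eq_mul_div, mul_comm (H (φ - δ))]
      constructor <;> intro h <;> linarith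
    · rw [div_le_iff₀ (hpos _), inner_needleDir_add,
        div_mul_eq_mul_div (H (φ + δ) / H φ - Real.cos δ), le_div_iff₀ hδ, sub_mul,
        div_mul_eq_mul_div, div_mul_eq_mul_div, mul_comm (H (φ + δ))]
      constructor <;> intro h <;> linarith
  rw [hset, volume_triangle φ hφ.le, hslope, sideTriangleArea]
  · congr 1
    field_simp
  · rw [← sub_nonneg, hslope]
    exact div_nonneg (sub_nonneg.2 hH) (by positivity)

lemma exists_int_inner_needleDir_nonneg (x : Plane) (θ : ℝ) {δ : ℝ} (hδ : 0 < δ) (hδπ : δ ≤ π) :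
    ∃ j : ℤ, 0 ≤ ⟪x, needleDir (θ + j * δ)⟫ := by
  obtain ⟨ψ, hψ⟩ := exists_forall_inner_needleDir_eq_norm_mul_cos x
  refine ⟨round ((ψ - θ) / δ), ?_⟩
  have hround : |ψ - (θ + round ((ψ - θ) / δ) * δ)| ≤ δ / 2 := by
    calc |ψ - (θ + round ((ψ - θ) / δ) * δ)|
        = |(ψ - θ) / δ - round ((ψ - θ) / δ)| * δ := by
          rw [← abs_of_pos hδ, ← abs_mul, abs_of_pos hδ, sub_mul, div_mul_cancel₀ _ hδ.ne',
            sub_sub]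
      _ ≤ 1 / 2 * δ := by gcongr; exact abs_sub_round _
      _ = δ / 2 := by ring
  rw [hψ]
  refine mul_nonneg (norm_nonneg x) (Real.cos_nonneg_of_mem_Icc ?_)
  exact abs_le.1 (hround.trans (by linarith))

lemma exists_mem_range_forall_le_of_periodic {α : Type*} [LinearOrder α] {n : ℕ} (hn : 0 < n)
    {g : ℤ → α} (hg : Function.Periodic g n) : ∃ i ∈ Finset.range n, ∀ j : ℤ, g j ≤ g i := by
  obtain ⟨i, hi, hmax⟩ := Finset.exists_max_image (Finset.range n) (fun i : ℕ => g i)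
    ⟨0, Finset.mem_range.2 hn⟩
  refine ⟨i, hi, fun j => ?_⟩
  obtain ⟨k, hk, hjk⟩ := hg.exists_mem_Ico₀ (by exact_mod_cast hn) j
  lift k to ℕ using hk.1
  rw [hjk]
  exact hmax k (Finset.mem_range.2 (by exact_mod_cast hk.2))

lemma sin_two_pi_div_pos {n : ℕ} (hn : 3 ≤ n) : 0 < Real.sin (2 * π / n) := by
  have hn' : (3 : ℝ) ≤ n := by exact_mod_cast hn
  refine Real.sin_pos_of_pos_of_lt_pi (by positivity) ?_
  rw [div_lt_iff₀ (by linarith)]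
  nlinarith [Real.pi_pos]

-- A point lies in the triangle over the side `i` maximizing `⟪x, uᵢ⟫ / h(uᵢ)`.
lemma subset_iUnion_sideTriangle (hX : IsCompact X) (h0 : X ∈ nhds 0) {n : ℕ} (hn : 2 ≤ n)
    (θ : ℝ) : X ⊆ ⋃ i ∈ Finset.range n,
      sideTriangle (supportFun X) (2 * π / n) (θ + i * (2 * π / n)) := by
  intro x hx
  have hn' : (2 : ℝ) ≤ n := by exact_mod_cast hn
  set δ : ℝ := 2 * π / n with hδ
  have hδpos : 0 < δ := by positivity
  have hδπ : δ ≤ π := (div_le_iff₀ (by linarith)).2 (by nlinarith [Real.pi_pos])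
  let g : ℤ → ℝ := fun j => ⟪x, needleDir (θ + j * δ)⟫ / supportFun X (θ + j * δ)
  have hg : Function.Periodic g n := fun j => by
    have hangle : θ + ((j + n : ℤ) : ℝ) * δ = θ + j * δ + 2 * π := by
      push_cast
      rw [hδ]
      field_simp
      ring
    simp only [g]
    rw [hangle, needleDir_periodic, supportFun_periodic X]
  obtain ⟨i, hi, hmax⟩ := exists_mem_range_forall_le_of_periodic (by omega) hg
  refine mem_iUnion₂.2 ⟨i, hi, ⟨?_, inner_le_supportFun hX hx _⟩, ?_, ?_⟩
  · obtain ⟨j, hj⟩ := exists_int_inner_needleDir_nonneg x θ hδpos hδπ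
    have hgi : 0 ≤ g i := (div_nonneg hj (supportFun_pos hX h0 _).le).trans (hmax j)
    simpa [g, le_div_iff₀ (supportFun_pos hX h0 _)] using hgi
  · simpa [g, add_mul, add_assoc] using hmax (i + 1)
  · simpa [g, sub_mul, add_sub_assoc] using hmax (i - 1)

lemma volume_le_sum_sideTriangleArea (hX : IsCompact X) (h0 : X ∈ nhds 0) {n : ℕ} (hn : 3 ≤ n)
    (θ : ℝ) : volume.real X ≤ ∑ i ∈ Finset.range n,
      sideTriangleArea (supportFun X) (2 * π / n) (θ + i * (2 * π / n)) := by
  have hsin := sin_two_pi_div_pos hn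
  have hpos := supportFun_pos hX h0
  have hcos := fun φ => two_mul_cos_mul_supportFun_le hX φ (2 * π / n)
  have hnonneg : ∀ φ, 0 ≤ sideTriangleArea (supportFun X) (2 * π / n) φ := fun φ =>
    div_nonneg (mul_nonneg (hpos φ).le (sub_nonneg.2 (hcos φ))) (by positivity)
  refine ENNReal.toReal_le_of_le_ofReal (Finset.sum_nonneg fun i _ => hnonneg _) ?_
  rw [ENNReal.ofReal_sum_of_nonneg fun i _ => hnonneg _]
  calc volume X ≤ ∑ i ∈ Finset.range n,
        volume (sideTriangle (supportFun X) (2 * π / n) (θ + i * (2 * π / n))) :=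
      (measure_mono (subset_iUnion_sideTriangle hX h0 (by omega) θ)).trans
        (measure_biUnion_finset_le _ _)
    _ = _ := Finset.sum_congr rfl fun i _ => volume_sideTriangle hpos hsin (hcos _)

variable {H : ℝ → ℝ} {T : ℝ}

lemma continuous_sideTriangleArea (hH : Continuous H) (δ : ℝ) :
    Continuous (sideTriangleArea H δ) := by
  unfold sideTriangleArea
  fun_prop

lemma sideTriangleArea_periodic (hper : Function.Periodic H T) (δ : ℝ) :
    Function.Periodic (sideTriangleArea H δ) T := fun φ => by
  rw [sideTriangleArea, add_right_comm φ T δ, add_sub_right_comm φ T δ, hper, hper, hper,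
    sideTriangleArea]

lemma integral_sideTriangleArea (hH : Continuous H) (hper : Function.Periodic H T) (δ : ℝ) :
    ∫ θ in (0)..T, sideTriangleArea H δ θ = ((∫ θ in (0)..T, H (θ + δ) * H θ) -
      Real.cos δ * ∫ θ in (0)..T, H θ ^ 2) / Real.sin δ := by
  have hshift : ∫ θ in (0)..T, H θ * H (θ - δ) = ∫ θ in (0)..T, H (θ + δ) * H θ := by
    simpa using intervalIntegral_comp_sub_right_of_periodic
      (f := fun θ => H (θ + δ) * H θ) ((hper.add_const δ).mul hper) δ
  have hexpand : ∀ θ, sideTriangleArea H δ θ = (H (θ + δ) * H θ + H θ * H (θ - δ) -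
      2 * Real.cos δ * H θ ^ 2) / (2 * Real.sin δ) := fun θ => by
    rw [sideTriangleArea]
    ring
  simp_rw [hexpand]
  rw [intervalIntegral.integral_div, intervalIntegral.integral_sub, intervalIntegral.integral_add,
    intervalIntegral.integral_const_mul, hshift]
  · ring
  all_goals exact Continuous.intervalIntegrable (by fun_prop) _ _

lemma integral_sq_increment (hH : Continuous H) (hper : Function.Periodic H T) (δ : ℝ) :
    ∫ θ in (0)..T, (H (θ + δ) - H θ) ^ 2 =
      2 * (∫ θ in (0)..T, H θ ^ 2) - 2 * ∫ θ in (0)..T, H (θ + δ) * H θ := by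
  have hshift : ∫ θ in (0)..T, H (θ + δ) ^ 2 = ∫ θ in (0)..T, H θ ^ 2 :=
    intervalIntegral_comp_add_right_of_periodic (f := fun θ => H θ ^ 2) (hper.comp (· ^ 2)) δ
  have hexpand : ∀ θ, (H (θ + δ) - H θ) ^ 2 =
      H (θ + δ) ^ 2 + H θ ^ 2 - 2 * (H (θ + δ) * H θ) := fun θ => by ring
  simp_rw [hexpand]
  rw [intervalIntegral.integral_sub, intervalIntegral.integral_add,
    intervalIntegral.integral_const_mul, hshift]
  · ring
  all_goals exact Continuous.intervalIntegrable (by fun_prop) _ _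

lemma integral_sum_range_comp_add {f : ℝ → ℝ} (hf : Continuous f) (hper : Function.Periodic f T)
    (n : ℕ) (δ : ℝ) : ∫ θ in (0)..T, ∑ i ∈ Finset.range n, f (θ + i * δ) =
      n * ∫ θ in (0)..T, f θ := by
  rw [intervalIntegral.integral_finsetSum fun i _ =>
    Continuous.intervalIntegrable (by fun_prop) _ _]
  simp [intervalIntegral_comp_add_right_of_periodic hper]

-- Averages the area of the circumscribed equiangular `n`-gons over all their rotations.
lemma volume_mul_le_integral_sub_integral_sq_increment (hX : IsCompact X) (h0 : X ∈ nhds 0)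
    {n : ℕ} (hn : 3 ≤ n) :
    volume.real X * (2 * π / n * Real.sin (2 * π / n)) ≤
      (1 - Real.cos (2 * π / n)) * (∫ θ in (0)..(2 * π), supportFun X θ ^ 2) -
      (∫ θ in (0)..(2 * π), (supportFun X (θ + 2 * π / n) - supportFun X θ) ^ 2) / 2 := by
  have hsin := sin_two_pi_div_pos hn
  have hn0 : (0 : ℝ) < n := by positivity
  have hcont := continuous_supportFun hX
  have hper := supportFun_periodic X
  have havg : 2 * π * volume.real X ≤
      n * ∫ θ in (0)..(2 * π), sideTriangleArea (supportFun X) (2 * π / n) θ := by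
    rw [← integral_sum_range_comp_add (continuous_sideTriangleArea hcont _)
      (sideTriangleArea_periodic hper _) n (2 * π / n)]
    calc 2 * π * volume.real X = ∫ _ in (0)..(2 * π), volume.real X := by simp
      _ ≤ _ := intervalIntegral.integral_mono (by positivity) (by simp)
        (Continuous.intervalIntegrable (continuous_finsetSum _ fun i _ =>
          (continuous_sideTriangleArea hcont _).comp (by fun_prop)) _ _)
        (volume_le_sum_sideTriangleArea hX h0 hn)
  rw [integral_sideTriangleArea hcont hper, ← mul_div_assoc, le_div_iff₀ hsin,
    mul_comm (n : ℝ), ← div_le_iff₀ hn0] at havg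
  rw [integral_sq_increment hcont hper]
  calc volume.real X * (2 * π / n * Real.sin (2 * π / n))
      = 2 * π * volume.real X * Real.sin (2 * π / n) / n := by ring
    _ ≤ _ := havg
    _ = _ := by ring

end Area

/-! ### Fourier coefficients of periodic functions -/

section Fourier

variable {T : ℝ} {H : ℝ → ℝ} (hH : Continuous H) (hper : Function.Periodic H T)

lemma norm_sq_fourier_sub_one (k : ℤ) (δ : ℝ) :
    ‖fourier k (δ : AddCircle T) - 1‖ ^ 2 = 2 * (1 - Real.cos (2 * π / T * (k * δ))) := by
  have hexp : fourier k (δ : AddCircle T) =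
      Complex.exp ((2 * π / T * (k * δ) : ℝ) * Complex.I) := by
    rw [fourier_coe_apply]
    congr 1
    push_cast
    ring
  have hnorm : ∀ a b : ℝ, ‖(a : ℂ) + b * Complex.I - 1‖ ^ 2 = (a - 1) ^ 2 + b ^ 2 := fun a b => by
    rw [Complex.sq_norm, Complex.normSq_apply]
    simp
    ring
  rw [hexp, Complex.exp_mul_I, ← Complex.ofReal_cos, ← Complex.ofReal_sin, hnorm]
  linear_combination Real.sin_sq_add_cos_sq (2 * π / T * (k * δ))

/-- A continuous real function of period `T`, as a complex function on the circle `ℝ / Tℤ`. -/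
noncomputable def periodicLift : C(AddCircle T, ℂ) where
  toFun := Function.Periodic.lift (f := fun θ => (H θ : ℂ)) (hper.comp ((↑) : ℝ → ℂ))
  continuous_toFun := continuous_coinduced_dom.mpr (Complex.continuous_ofReal.comp hH)

lemma periodicLift_coe (θ : ℝ) : periodicLift hH hper θ = H θ := rfl

variable [Fact (0 < T)]

lemma integral_haarAddCircle_eq_intervalIntegral (g : AddCircle T → ℝ) :
    ∫ t, g t ∂AddCircle.haarAddCircle = T⁻¹ * ∫ θ in (0)..T, g θ := by
  rw [AddCircle.integral_haarAddCircle, smul_eq_mul, ← AddCircle.intervalIntegral_preimage T 0,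
    zero_add]

lemma hasSum_sq_fourierCoeff_continuousMap (g : C(AddCircle T, ℂ)) :
    HasSum (fun k => ‖fourierCoeff g k‖ ^ 2) (T⁻¹ * ∫ θ in (0)..T, ‖g θ‖ ^ 2) := by
  have hparseval := hasSum_sq_fourierCoeff (ContinuousMap.toLp 2 AddCircle.haarAddCircle ℂ g)
  simp_rw [fourierCoeff_toLp] at hparseval
  rw [← integral_haarAddCircle_eq_intervalIntegral fun t => ‖g t‖ ^ 2]
  convert hparseval using 1
  refine integral_congr_ae ?_
  filter_upwards [ContinuousMap.coeFn_toLp (p := 2) (𝕜 := ℂ) AddCircle.haarAddCircle g] with t ht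
  rw [ht]

lemma fourierCoeff_comp_add_right (g : AddCircle T → ℂ) (δ : AddCircle T) (k : ℤ) :
    fourierCoeff (fun t => g (t + δ)) k = fourier k δ * fourierCoeff g k := by
  unfold fourierCoeff
  rw [← integral_add_right_eq_self (μ := AddCircle.haarAddCircle)
    (fun t => fourier (-k) t • g t) δ, ← integral_const_mul]
  refine integral_congr_ae (Filter.Eventually.of_forall fun t => ?_)
  have hadd : fourier (-k) (t + δ) = fourier (-k) t * fourier (-k) δ := by
    simp [fourier_apply, smul_add, AddCircle.toCircle_add]
  have hinv : fourier k δ * fourier (-k) δ = 1 := by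
    rw [← fourier_add, add_neg_cancel, fourier_zero]
  simp only [smul_eq_mul]
  rw [hadd]
  linear_combination (-(fourier (-k) t * g (t + δ))) * hinv

lemma fourierCoeff_increment (g : C(AddCircle T, ℂ)) (δ : AddCircle T) (k : ℤ) :
    fourierCoeff (fun t => g (t + δ) - g t) k = (fourier k δ - 1) * fourierCoeff g k := by
  have hint : ∀ q : C(AddCircle T, ℂ), Integrable q AddCircle.haarAddCircle := fun q =>
    q.continuous.integrable_of_hasCompactSupport (HasCompactSupport.of_compactSpace _)
  have hshift : Integrable (fun t => g (t + δ)) AddCircle.haarAddCircle :=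
    hint ⟨fun t => g (t + δ), by fun_prop⟩
  have hsub : (fun t => g (t + δ) - g t) = (fun t => g (t + δ)) + (-1 : ℂ) • ⇑g := by
    funext t
    simp [sub_eq_add_neg]
  rw [hsub, fourierCoeff.add hshift ((hint g).smul (-1 : ℂ)), Pi.add_apply,
    fourierCoeff_comp_add_right, fourierCoeff.const_smul, smul_eq_mul]
  ring

lemma eq_sum_fourierCoeff_smul_fourier {g : C(AddCircle T, ℂ)} {s : Finset ℤ}
    (hs : ∀ k ∉ s, fourierCoeff g k = 0) (t : AddCircle T) :
    g t = ∑ k ∈ s, fourierCoeff g k • fourier k t :=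
  (has_pointwise_sum_fourier_series_of_summable (summable_of_ne_finset_zero hs) t).unique
    (hasSum_sum_of_ne_finset_zero fun k hk => by rw [hs k hk, zero_smul])

lemma hasSum_sq_fourierCoeff_periodicLift :
    HasSum (fun k => ‖fourierCoeff (periodicLift hH hper) k‖ ^ 2)
      (T⁻¹ * ∫ θ in (0)..T, H θ ^ 2) := by
  simpa only [periodicLift_coe, Complex.norm_real, Real.norm_eq_abs, sq_abs]
    using hasSum_sq_fourierCoeff_continuousMap (periodicLift hH hper)

lemma hasSum_one_sub_cos_mul_sq_fourierCoeff_periodicLift (δ : ℝ) :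
    HasSum (fun k : ℤ => 2 * (1 - Real.cos (2 * π / T * (k * δ))) *
        ‖fourierCoeff (periodicLift hH hper) k‖ ^ 2)
      (T⁻¹ * ∫ θ in (0)..T, (H (θ + δ) - H θ) ^ 2) := by
  let g : C(AddCircle T, ℂ) :=
    ⟨fun t => periodicLift hH hper (t + δ) - periodicLift hH hper t, by fun_prop⟩
  have hg : ∀ θ : ℝ, ‖g θ‖ ^ 2 = (H (θ + δ) - H θ) ^ 2 := fun θ => by
    have hcoe : g θ = ((H (θ + δ) - H θ : ℝ) : ℂ) := by
      simp only [g, ContinuousMap.coe_mk, ← AddCircle.coe_add, periodicLift_coe,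
        Complex.ofReal_sub]
    rw [hcoe, Complex.norm_real, Real.norm_eq_abs, sq_abs]
  have hcoeff : ∀ k, ‖fourierCoeff g k‖ ^ 2 = 2 * (1 - Real.cos (2 * π / T * (k * δ))) *
      ‖fourierCoeff (periodicLift hH hper) k‖ ^ 2 := fun k => by
    rw [show fourierCoeff g k = _ from fourierCoeff_increment (periodicLift hH hper) δ k, norm_mul,
      mul_pow, norm_sq_fourier_sub_one]
  simpa only [hg, hcoeff] using hasSum_sq_fourierCoeff_continuousMap g

lemma fourierCoeff_periodicLift_zero :
    fourierCoeff (periodicLift hH hper) 0 = (T⁻¹ * ∫ θ in (0)..T, H θ : ℝ) := by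
  rw [fourierCoeff_eq_intervalIntegral _ _ 0, zero_add]
  simp [periodicLift_coe, intervalIntegral.integral_ofReal]

end Fourier

/-! ### The isoperimetric inequality -/

section Isoperimetric

lemma one_sub_cos_eq_sinc (x : ℝ) : 1 - Real.cos x = x ^ 2 / 2 * Real.sinc (x / 2) ^ 2 := by
  have hhalf := Real.sin_sq_eq_half_sub (x / 2)
  rw [mul_div_cancel₀ x two_ne_zero] at hhalf
  rcases eq_or_ne x 0 with rfl | hx
  · simp
  · rw [Real.sinc_of_ne_zero (by positivity), div_pow, hhalf]
    field_simp

private instance fact_two_pi_pos : Fact (0 < 2 * π) := ⟨Real.two_pi_pos⟩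

variable {X : Set Plane}

/-- The support function of a compact set, as a complex function on the circle. -/
noncomputable abbrev supportLift (hX : IsCompact X) : C(AddCircle (2 * π), ℂ) :=
  periodicLift (continuous_supportFun hX) (supportFun_periodic X)

lemma norm_sq_fourierCoeff_supportLift_zero (hX : IsCompact X) :
    ‖fourierCoeff (supportLift hX) 0‖ ^ 2 = (cauchyPerimeter X / (2 * π)) ^ 2 := by
  rw [fourierCoeff_periodicLift_zero, Complex.norm_real, Real.norm_eq_abs, sq_abs,
    inv_mul_eq_div, cauchyPerimeter]

lemma volume_mul_sinc_le (hX : IsCompact X) (h0 : X ∈ nhds 0) {n : ℕ} (hn : 3 ≤ n)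
    (s : Finset ℤ) : volume.real X * Real.sinc (2 * π / n) ≤
      π * (Real.sinc (2 * π / n / 2) ^ 2 * ∑' k, ‖fourierCoeff (supportLift hX) k‖ ^ 2 -
        ∑ k ∈ s, (k : ℝ) ^ 2 * Real.sinc (k * (2 * π / n) / 2) ^ 2 *
          ‖fourierCoeff (supportLift hX) k‖ ^ 2) := by
  have harea := volume_mul_le_integral_sub_integral_sq_increment hX h0 hn
  rw [(hasSum_sq_fourierCoeff_periodicLift (continuous_supportFun hX)
    (supportFun_periodic X)).tsum_eq]
  have hincr := hasSum_one_sub_cos_mul_sq_fourierCoeff_periodicLift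
    (continuous_supportFun hX) (supportFun_periodic X) (2 * π / n)
  set δ : ℝ := 2 * π / n
  have hδ : 0 < δ := by positivity
  have hbessel : δ ^ 2 * ∑ k ∈ s, (k : ℝ) ^ 2 * Real.sinc (k * δ / 2) ^ 2 *
      ‖fourierCoeff (supportLift hX) k‖ ^ 2 ≤
      (2 * π)⁻¹ * ∫ θ in (0)..(2 * π), (supportFun X (θ + δ) - supportFun X θ) ^ 2 := by
    refine le_trans (le_of_eq ?_) (sum_le_hasSum s (fun k _ => mul_nonneg (mul_nonneg zero_le_two
      (sub_nonneg.2 (Real.cos_le_one _))) (sq_nonneg _)) hincr)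
    rw [Finset.mul_sum]
    refine Finset.sum_congr rfl fun k _ => ?_
    rw [div_self Real.two_pi_pos.ne', one_mul, one_sub_cos_eq_sinc]
    ring
  have hsin : Real.sin δ = δ * Real.sinc δ := by
    rw [Real.sinc_of_ne_zero hδ.ne', mul_div_cancel₀ _ hδ.ne']
  rw [one_sub_cos_eq_sinc, hsin] at harea
  rw [inv_mul_eq_div, le_div_iff₀ Real.two_pi_pos] at hbessel
  have hmean : π * (2 * π)⁻¹ = 1 / 2 := by
    field_simp
  refine le_of_mul_le_mul_left ?_ (pow_pos hδ 2)
  linear_combination harea + hbessel / 2 - (δ ^ 2 * Real.sinc (δ / 2) ^ 2 *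
    ∫ θ in (0)..(2 * π), supportFun X θ ^ 2) * hmean

-- The limit `n → ∞` of the previous bound.
lemma volume_le_tsum_sub_sum (hX : IsCompact X) (h0 : X ∈ nhds 0) (s : Finset ℤ) :
    volume.real X ≤ π * (∑' k, ‖fourierCoeff (supportLift hX) k‖ ^ 2 -
      ∑ k ∈ s, (k : ℝ) ^ 2 * ‖fourierCoeff (supportLift hX) k‖ ^ 2) := by
  have hlim : Filter.Tendsto (fun n : ℕ => 2 * π / (n : ℝ)) Filter.atTop (nhds 0) :=
    tendsto_const_div_atTop_nhds_zero_nat _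
  have _ := Real.continuous_sinc
  have hleft : Continuous fun x : ℝ => volume.real X * Real.sinc x := by fun_prop
  have hright : Continuous fun x : ℝ => π * (Real.sinc (x / 2) ^ 2 *
      ∑' k, ‖fourierCoeff (supportLift hX) k‖ ^ 2 - ∑ k ∈ s, (k : ℝ) ^ 2 *
        Real.sinc (k * x / 2) ^ 2 * ‖fourierCoeff (supportLift hX) k‖ ^ 2) := by fun_prop
  simpa using le_of_tendsto_of_tendsto ((hleft.tendsto 0).comp hlim) ((hright.tendsto 0).comp hlim)
    (Filter.eventually_atTop.2 ⟨3, fun n hn => volume_mul_sinc_le hX h0 hn s⟩)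

lemma volume_le_sub_mul_norm_sq_fourierCoeff (hX : IsCompact X) (h0 : X ∈ nhds 0) {K : ℤ}
    (hK : K ≠ 0) : volume.real X ≤ π * (‖fourierCoeff (supportLift hX) 0‖ ^ 2 -
      ((K : ℝ) ^ 2 - 1) * ‖fourierCoeff (supportLift hX) K‖ ^ 2) := by
  set c := fourierCoeff (supportLift hX)
  set S := ∑' k, ‖c k‖ ^ 2
  have hS : HasSum (fun k => ‖c k‖ ^ 2) S :=
    (hasSum_sq_fourierCoeff_periodicLift _ _).summable.hasSum
  have hlim : Filter.Tendsto (fun s : Finset ℤ => π * ((S - ∑ k ∈ s, ‖c k‖ ^ 2) + (‖c 0‖ ^ 2 -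
      ((K : ℝ) ^ 2 - 1) * ‖c K‖ ^ 2))) Filter.atTop
      (nhds (π * ((S - S) + (‖c 0‖ ^ 2 - ((K : ℝ) ^ 2 - 1) * ‖c K‖ ^ 2)))) :=
    ((tendsto_const_nhds.sub hS).add tendsto_const_nhds).const_mul π
  rw [sub_self, zero_add] at hlim
  refine ge_of_tendsto hlim (Filter.eventually_atTop.2 ⟨{0, K}, fun s hs => ?_⟩)
  refine (volume_le_tsum_sub_sum hX h0 s).trans (mul_le_mul_of_nonneg_left ?_ Real.pi_pos.le)
  have hsum : ∑ k ∈ ({0, K} : Finset ℤ), ((k : ℝ) ^ 2 - 1) * ‖c k‖ ^ 2 ≤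
      ∑ k ∈ s, ((k : ℝ) ^ 2 - 1) * ‖c k‖ ^ 2 := by
    refine Finset.sum_le_sum_of_subset_of_nonneg hs fun k _ hk => ?_
    have hk0 : k ≠ 0 := fun h => hk (by simp [h])
    have hk1 : (1 : ℝ) ≤ (k : ℝ) ^ 2 := by
      exact_mod_cast Int.add_one_le_iff.2 (sq_pos_of_ne_zero hk0)
    exact mul_nonneg (sub_nonneg.2 hk1) (sq_nonneg _)
  simp only [Finset.sum_pair hK.symm, sub_mul, one_mul, Finset.sum_sub_distrib, Int.cast_zero,
    zero_pow two_ne_zero, zero_mul, zero_sub] at hsum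
  linarith

lemma exists_fourierCoeff_supportLift_ne_zero (hX : IsCompact X) (hconv : Convex ℝ X)
    (hne : X.Nonempty) (hnd : ¬∃ (c : Plane) (r : ℝ), X = closedBall c r) :
    ∃ K : ℤ, 1 < |K| ∧ fourierCoeff (supportLift hX) K ≠ 0 := by
  by_contra! hlow
  set c := fourierCoeff (supportLift hX)
  have hspec : ∀ k ∉ ({0, 1, -1} : Finset ℤ), c k = 0 := fun k hk => hlow k <| by
    simp only [Finset.mem_insert, Finset.mem_singleton, not_or] at hk
    rcases abs_cases k with ⟨h, _⟩ | ⟨h, _⟩ <;> omega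
  refine hnd ⟨!₂[(c 1 + c (-1)).re, (c (-1) - c 1).im], (c 0).re,
    eq_closedBall_of_supportFun_eq hX hconv hne fun θ => ?_⟩
  have hexp : ∀ k : ℤ, fourier k (θ : AddCircle (2 * π)) =
      Real.cos (k * θ) + Real.sin (k * θ) * Complex.I := fun k => by
    rw [fourier_coe_apply, Complex.ofReal_cos, Complex.ofReal_sin, ← Complex.exp_mul_I]
    congr 1
    have hπ : (π : ℂ) ≠ 0 := by exact_mod_cast Real.pi_ne_zero
    push_cast
    field_simp
  have hre := congrArg Complex.re (eq_sum_fourierCoeff_smul_fourier hspec (θ : AddCircle (2 * π)))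
  rw [periodicLift_coe, Finset.sum_insert (by decide), Finset.sum_pair (by decide)] at hre
  simp only [hexp, smul_eq_mul, Complex.add_re, Complex.mul_re, Complex.ofReal_re,
    Complex.ofReal_im, Complex.I_re, Complex.I_im, Complex.add_im, Complex.mul_im, Int.cast_zero,
    Int.cast_one, Int.cast_neg, zero_mul, one_mul, neg_mul, Real.cos_zero, Real.sin_zero,
    Real.cos_neg, Real.sin_neg] at hre
  rw [hre, inner_needleDir_right]
  simp only [Complex.add_re, Complex.sub_im, Matrix.cons_val_zero, Matrix.cons_val_one]
  ring

lemma four_pi_mul_volume_lt_sq_cauchyPerimeter_of_mem_nhds (hX : IsCompact X) (hconv : Convex ℝ X)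
    (h0 : X ∈ nhds 0) (hnd : ¬∃ (c : Plane) (r : ℝ), X = closedBall c r) :
    4 * π * volume.real X < cauchyPerimeter X ^ 2 := by
  obtain ⟨K, hK, hcK⟩ :=
    exists_fourierCoeff_supportLift_ne_zero hX hconv ⟨0, mem_of_mem_nhds h0⟩ hnd
  have hK0 : K ≠ 0 := abs_pos.1 (one_pos.trans hK)
  have hK2 : (1 : ℝ) < (K : ℝ) ^ 2 := by exact_mod_cast (one_lt_sq_iff_one_lt_abs K).2 hK
  have hdefect : 0 < ((K : ℝ) ^ 2 - 1) * ‖fourierCoeff (supportLift hX) K‖ ^ 2 :=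
    mul_pos (sub_pos.2 hK2) (pow_pos (norm_pos_iff.2 hcK) 2)
  calc 4 * π * volume.real X
      ≤ 4 * π * (π * (‖fourierCoeff (supportLift hX) 0‖ ^ 2 -
          ((K : ℝ) ^ 2 - 1) * ‖fourierCoeff (supportLift hX) K‖ ^ 2)) := by
        gcongr
        exact volume_le_sub_mul_norm_sq_fourierCoeff hX h0 hK0
    _ < 4 * π * (π * ‖fourierCoeff (supportLift hX) 0‖ ^ 2) := by
        gcongr
        linarith
    _ = cauchyPerimeter X ^ 2 := by
        rw [norm_sq_fourierCoeff_supportLift_zero]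
        field_simp
        ring

lemma neg_vadd_mem_nhds_zero {c : Plane} (hc : c ∈ interior X) : -c +ᵥ X ∈ nhds 0 := by
  have hmem := vadd_mem_nhds_vadd (-c) (mem_interior_iff_mem_nhds.1 hc)
  rwa [vadd_eq_add, neg_add_cancel] at hmem

theorem four_pi_mul_volume_lt_sq_cauchyPerimeter (hX : IsCompact X) (hconv : Convex ℝ X)
    (hint : (interior X).Nonempty) (hnd : ¬∃ (c : Plane) (r : ℝ), X = closedBall c r) :
    4 * π * volume.real X < cauchyPerimeter X ^ 2 := by
  obtain ⟨c, hc⟩ := hint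
  rw [measureReal_def, ← measure_vadd volume (-c) X,
    ← cauchyPerimeter_vadd hX ⟨c, interior_subset hc⟩ (-c)]
  refine four_pi_mul_volume_lt_sq_cauchyPerimeter_of_mem_nhds (hX.vadd _) (hconv.vadd _)
    (neg_vadd_mem_nhds_zero hc) ?_
  rintro ⟨b, r, hb⟩
  exact hnd ⟨c +ᵥ b, r, by rw [← vadd_closedBall, ← hb, vadd_neg_vadd]⟩

end Isoperimetric

/-! ### The perimeter of a convex body -/

section CurveLength

variable {E : Type*} [MetricSpace E] {γ : ℝ → E} {a b : ℝ}

lemma exists_subdivision_dist_lt (hab : a ≤ b) (hγ : ContinuousOn γ (Icc a b)) {ε : ℝ}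
    (hε : 0 < ε) : ∃ (n : ℕ) (w : ℕ → ℝ), Monotone w ∧ (∀ i, w i ∈ Icc a b) ∧ w 0 = a ∧ w n = b ∧
      ∀ t ∈ Icc a b, ∃ j ≤ n, dist (γ t) (γ (w j)) < ε := by
  obtain ⟨w, hw0, hw, ⟨n, hn⟩, hsub⟩ := exists_monotone_Icc_subset_open_cover_Icc hab
    (c := fun x : Icc a b => (Icc a b).domRestrict γ ⁻¹' ball (γ x) (ε / 2))
    (fun x => isOpen_ball.preimage hγ.domRestrict)
    (fun x _ => mem_iUnion.2 ⟨x, mem_ball_self (half_pos hε)⟩)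
  refine ⟨n, fun i => w i, hw, fun i => (w i).2, hw0, hn n le_rfl, fun t ht => ?_⟩
  have hex : ∃ j, t ≤ w j := ⟨n, (hn n le_rfl).symm ▸ ht.2⟩
  refine ⟨Nat.find hex, Nat.find_min' hex ((hn n le_rfl).symm ▸ ht.2), ?_⟩
  have hle := Nat.find_spec hex
  rcases hj : Nat.find hex with _ | j
  · rw [hj, hw0] at hle
    simpa only [hw0, hle.antisymm ht.1, dist_self] using hε
  · rw [hj] at hle
    have hlt : w j < t := not_le.1 (Nat.find_min hex (hj ▸ j.lt_succ_self))
    obtain ⟨x, hx⟩ := hsub j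
    have hball_t : γ t ∈ ball (γ x) (ε / 2) := @hx ⟨t, ht⟩ ⟨hlt.le, hle⟩
    have hball_w : γ (w (j + 1)) ∈ ball (γ x) (ε / 2) := hx ⟨hw j.le_succ, le_rfl⟩
    exact (dist_triangle_right _ _ _).trans_lt
      ((add_lt_add hball_t hball_w).trans_eq (add_halves ε))

variable [MeasurableSpace E] [BorelSpace E]

-- Project by the distance to `γ a`, which is `1`-Lipschitz.
lemma edist_le_hausdorffMeasure_image (hab : a ≤ b) (hγ : ContinuousOn γ (Icc a b)) :
    edist (γ b) (γ a) ≤ μH[1] (γ '' Ioc a b) := by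
  have hvalues : Ioc 0 (dist (γ b) (γ a)) ⊆ (fun x => dist x (γ a)) '' (γ '' Ioc a b) := by
    rw [image_image]
    simpa using intermediate_value_Ioc hab (f := fun t => dist (γ t) (γ a)) (by fun_prop)
  calc edist (γ b) (γ a) = μH[1] (Ioc 0 (dist (γ b) (γ a))) := by
        rw [hausdorffMeasure_real, Real.volume_Ioc, sub_zero, edist_dist]
    _ ≤ μH[1] ((fun x => dist x (γ a)) '' (γ '' Ioc a b)) := measure_mono hvalues
    _ ≤ μH[1] (γ '' Ioc a b) := by
        simpa using (LipschitzWith.dist_left (γ a)).hausdorffMeasure_image_le (d := 1) zero_le_one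
          (γ '' Ioc a b)

lemma eVariationOn_le_hausdorffMeasure_image (hγ : ContinuousOn γ (Icc a b))
    (hinj : InjOn γ (Ioc a b)) : eVariationOn γ (Icc a b) ≤ μH[1] (γ '' Ioc a b) := by
  refine iSup_le fun ⟨n, w, hw, hmem⟩ => ?_
  have hsub : ∀ i, Ioc (w i) (w (i + 1)) ⊆ Ioc a b := fun i =>
    Ioc_subset_Ioc (hmem i).1 (hmem (i + 1)).2
  have hcont : ∀ i, ContinuousOn γ (Icc (w i) (w (i + 1))) := fun i =>
    hγ.mono (Icc_subset_Icc (hmem i).1 (hmem (i + 1)).2)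
  have hdisj : Pairwise (Function.onFun Disjoint fun i => γ '' Ioc (w i) (w (i + 1))) :=
    fun i j hij => by
      have harcs := hw.pairwise_disjoint_on_Ioc_succ hij
      simp only [Function.onFun, Order.succ_eq_add_one, disjoint_iff_inter_eq_empty] at harcs ⊢
      rw [← hinj.image_inter (hsub i) (hsub j), harcs, image_empty]
  have hmeas : ∀ i, MeasurableSet (γ '' Ioc (w i) (w (i + 1))) := fun i =>
    measurableSet_Ioc.image_of_continuousOn_injOn ((hcont i).mono Ioc_subset_Icc_self)
      (hinj.mono (hsub i))
  calc ∑ i ∈ Finset.range n, edist (γ (w (i + 1))) (γ (w i))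
      ≤ ∑ i ∈ Finset.range n, μH[1] (γ '' Ioc (w i) (w (i + 1))) :=
        Finset.sum_le_sum fun i _ => edist_le_hausdorffMeasure_image (hw i.le_succ) (hcont i)
    _ = μH[1] (⋃ i ∈ Finset.range n, γ '' Ioc (w i) (w (i + 1))) :=
        (measure_biUnion_finset (hdisj.set_pairwise _) fun i _ => hmeas i).symm
    _ ≤ μH[1] (γ '' Ioc a b) := measure_mono (iUnion₂_subset fun i _ => image_mono (hsub i))

end CurveLength

section Polygon

lemma integral_abs_cos : ∫ θ in (0)..(2 * π), |Real.cos θ| = 4 := by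
  have hper : Function.Periodic (fun θ => |Real.cos θ|) π := fun θ => by
    simp only [Real.cos_add_pi, abs_neg]
  have hhalf : ∫ θ in (-(π / 2))..(π / 2), |Real.cos θ| = 2 := by
    have hcongr : ∫ θ in (-(π / 2))..(π / 2), |Real.cos θ| =
        ∫ θ in (-(π / 2))..(π / 2), Real.cos θ := by
      refine intervalIntegral.integral_congr fun θ hθ => abs_of_nonneg ?_
      rw [uIcc_of_le (by linarith [Real.pi_pos])] at hθ
      exact Real.cos_nonneg_of_mem_Icc hθ
    rw [hcongr, integral_cos, Real.sin_neg, Real.sin_pi_div_two]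
    norm_num
  have hint : ∀ a b : ℝ, IntervalIntegrable (fun θ => |Real.cos θ|) volume a b := fun a b =>
    Continuous.intervalIntegrable (by fun_prop) a b
  have hfirst := hper.intervalIntegral_add_eq 0 (-(π / 2))
  have hsecond := hper.intervalIntegral_add_eq π (-(π / 2))
  rw [neg_add_eq_sub, sub_half, hhalf] at hfirst hsecond
  rw [two_mul, ← intervalIntegral.integral_add_adjacent_intervals (hint 0 π) (hint π (π + π)),
    hsecond, ← zero_add π, hfirst]
  norm_num

lemma integral_abs_inner_needleDir (v : Plane) :
    ∫ θ in (0)..(2 * π), |⟪v, needleDir θ⟫| = 4 * ‖v‖ := by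
  obtain ⟨ψ, hψ⟩ := exists_forall_inner_needleDir_eq_norm_mul_cos v
  have hper : Function.Periodic (fun θ => |Real.cos θ|) (2 * π) := fun θ => by
    simp only [Real.cos_add_two_pi]
  simp_rw [hψ, abs_mul, abs_norm, ← Real.cos_neg (ψ - _), neg_sub]
  rw [intervalIntegral.integral_const_mul, intervalIntegral_comp_sub_right_of_periodic hper,
    integral_abs_cos, mul_comm]

lemma two_mul_sub_le_sum_abs {f : ℕ → ℝ} {n j m : ℕ} (hf : f n = f 0) (hj : j ≤ n)
    (hm : m ≤ n) : 2 * (f j - f m) ≤ ∑ i ∈ Finset.range n, |f (i + 1) - f i| := by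
  wlog hjm : j ≤ m generalizing f j m
  · have hneg := this (f := -f) (by simp [hf]) hm hj (le_of_not_ge hjm)
    simp only [Pi.neg_apply, neg_sub_neg, abs_sub_comm (f _) (f (_ + 1))] at hneg
    exact hneg
  simp_rw [abs_sub_comm (f (_ + 1)), ← Real.dist_eq]
  rw [Finset.range_eq_Ico, ← Finset.sum_Ico_consecutive _ (Nat.zero_le j) hj,
    ← Finset.sum_Ico_consecutive _ hjm hm]
  have hstart := dist_le_Ico_sum_dist f (Nat.zero_le j)
  have hmiddle := dist_le_Ico_sum_dist f hjm
  have hend := dist_le_Ico_sum_dist f hm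
  rw [Real.dist_eq] at hstart hmiddle hend
  linarith [le_abs_self (f j - f m), neg_le_abs (f 0 - f j), neg_le_abs (f m - f n)]

lemma cauchyPerimeter_vertices_le {p : ℕ → Plane} {n : ℕ} (hp : p n = p 0) :
    cauchyPerimeter (p '' Iic n) ≤ ∑ i ∈ Finset.range n, dist (p (i + 1)) (p i) := by
  have hK : IsCompact (p '' Iic n) := ((finite_Iic n).image p).isCompact
  have hne : (p '' Iic n).Nonempty := nonempty_Iic.image p
  have hcont := continuous_width hK
  have hwidth : ∀ θ, 2 * width (p '' Iic n) θ ≤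
      ∑ i ∈ Finset.range n, |⟪p (i + 1) - p i, needleDir θ⟫| := fun θ => by
    obtain ⟨_, ⟨j, hj, rfl⟩, hjθ⟩ := exists_inner_eq_supportFun hK hne θ
    obtain ⟨_, ⟨m, hm, rfl⟩, hmθ⟩ := exists_inner_eq_supportFun hK hne (θ + π)
    rw [width, ← hjθ, ← hmθ, needleDir_add_pi, inner_neg_right, ← sub_eq_add_neg]
    simp_rw [inner_sub_left]
    exact two_mul_sub_le_sum_abs (f := fun i => ⟪p i, needleDir θ⟫) (by rw [hp]) hj hm
  have hint := intervalIntegral.integral_mono (μ := volume) Real.two_pi_pos.le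
    (Continuous.intervalIntegrable (by fun_prop) _ _)
    (Continuous.intervalIntegrable (by fun_prop) _ _) hwidth
  rw [intervalIntegral.integral_finsetSum fun i _ =>
      Continuous.intervalIntegrable (by fun_prop) _ _, intervalIntegral.integral_const_mul,
    integral_width hK] at hint
  simp_rw [integral_abs_inner_needleDir, ← Finset.mul_sum, ← dist_eq_norm] at hint
  linarith

lemma cauchyPerimeter_le_of_supportFun_le_add {X Y : Set Plane} (hX : IsCompact X)
    (hY : IsCompact Y) {ε : ℝ} (h : ∀ θ, supportFun X θ ≤ supportFun Y θ + ε) :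
    cauchyPerimeter X ≤ cauchyPerimeter Y + 2 * π * ε := by
  have hcont := continuous_supportFun hY
  have hint := intervalIntegral.integral_mono (μ := volume) Real.two_pi_pos.le
    ((continuous_supportFun hX).intervalIntegrable _ _)
    (Continuous.intervalIntegrable (by fun_prop) _ _) h
  rw [intervalIntegral.integral_add (hcont.intervalIntegrable _ _) intervalIntegrable_const,
    intervalIntegral.integral_const, sub_zero, smul_eq_mul] at hint
  exact hint

lemma cauchyPerimeter_closedCurve_le {γ : ℝ → Plane} {a b : ℝ} (hab : a ≤ b)
    (hγ : ContinuousOn γ (Icc a b)) (hclosed : γ a = γ b) :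
    ENNReal.ofReal (cauchyPerimeter (γ '' Icc a b)) ≤ eVariationOn γ (Icc a b) := by
  have hcompact := isCompact_Icc.image_of_continuousOn hγ
  refine ENNReal.le_of_forall_pos_le_add fun ε hε _ => ?_
  have hε' : 0 < (ε : ℝ) / (2 * π) := div_pos hε Real.two_pi_pos
  obtain ⟨n, w, hw, hmem, hw0, hwn, hnear⟩ := exists_subdivision_dist_lt hab hγ hε'
  have hK : IsCompact ((γ ∘ w) '' Iic n) := ((finite_Iic n).image _).isCompact
  have hsupp : ∀ θ, supportFun (γ '' Icc a b) θ ≤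
      supportFun ((γ ∘ w) '' Iic n) θ + ε / (2 * π) := fun θ => by
    obtain ⟨_, ⟨t, ht, rfl⟩, htθ⟩ :=
      exists_inner_eq_supportFun hcompact ((nonempty_Icc.2 hab).image γ) θ
    obtain ⟨j, hj, hdist⟩ := hnear t ht
    have hvertex := inner_le_supportFun hK (mem_image_of_mem (γ ∘ w) hj) θ
    rw [dist_eq_norm] at hdist
    have hdiff := norm_le_iff_forall_inner_needleDir_le.1 hdist.le θ
    rw [inner_sub_left] at hdiff
    rw [Function.comp_apply] at hvertex
    linarith
  have hpoly := (cauchyPerimeter_le_of_supportFun_le_add hcompact hK hsupp).trans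
    (add_le_add_left (cauchyPerimeter_vertices_le (by simp [hw0, hwn, hclosed])) _)
  rw [mul_div_cancel₀ _ Real.two_pi_pos.ne'] at hpoly
  calc ENNReal.ofReal (cauchyPerimeter (γ '' Icc a b))
      ≤ ENNReal.ofReal (∑ i ∈ Finset.range n, dist (γ (w (i + 1))) (γ (w i)) + ε) :=
        ENNReal.ofReal_le_ofReal hpoly
    _ = ∑ i ∈ Finset.range n, edist (γ (w (i + 1))) (γ (w i)) + ε := by
        have hnonneg : ∀ i ∈ Finset.range n, 0 ≤ dist (γ (w (i + 1))) (γ (w i)) :=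
          fun _ _ => dist_nonneg
        rw [ENNReal.ofReal_add (Finset.sum_nonneg hnonneg) ε.coe_nonneg,
          ENNReal.ofReal_sum_of_nonneg hnonneg, ENNReal.ofReal_coe_nnreal]
        simp only [edist_dist]
    _ ≤ eVariationOn γ (Icc a b) + ε := by
        gcongr
        exact eVariationOn.sum_le hw hmem

end Polygon

section Radial

variable {X : Set Plane}

/-- The point where the ray from the origin in direction `φ` leaves a convex body `X` that is a
neighbourhood of the origin. -/
noncomputable def radialPoint (X : Set Plane) (φ : ℝ) : Plane :=
  (gauge X (needleDir φ))⁻¹ • needleDir φ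

lemma radialPoint_periodic (X : Set Plane) : Function.Periodic (radialPoint X) (2 * π) :=
  fun φ => by simp only [radialPoint, needleDir_periodic φ]

lemma gauge_needleDir_pos (hX : IsCompact X) (h0 : X ∈ nhds 0) (φ : ℝ) :
    0 < gauge X (needleDir φ) :=
  (gauge_pos (absorbent_nhds_zero h0) (NormedSpace.isVonNBounded_iff ℝ |>.2 hX.isBounded)).2
    (norm_pos_iff.1 (by simp))

lemma continuous_radialPoint (hX : IsCompact X) (hconv : Convex ℝ X) (h0 : X ∈ nhds 0) :
    Continuous (radialPoint X) :=
  (((continuous_gauge hconv h0).comp continuous_needleDir).inv₀ fun φ =>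
    (gauge_needleDir_pos hX h0 φ).ne').smul continuous_needleDir

lemma radialPoint_mem_frontier (hX : IsCompact X) (hconv : Convex ℝ X) (h0 : X ∈ nhds 0) (φ : ℝ) :
    radialPoint X φ ∈ frontier X := by
  have hpos := gauge_needleDir_pos hX h0 φ
  rw [← gauge_eq_one_iff_mem_frontier hconv h0, radialPoint,
    gauge_smul_of_nonneg (inv_nonneg.2 hpos.le), smul_eq_mul, inv_mul_cancel₀ hpos.ne']

lemma injOn_needleDir (a : ℝ) : InjOn needleDir (Ioc a (a + 2 * π)) := by
  intro φ hφ ψ hψ h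
  have hcos : Real.cos (φ - ψ) = 1 := by
    rw [← inner_needleDir, h, inner_needleDir, sub_self, Real.cos_zero]
  exact sub_eq_zero.1 ((Real.cos_eq_one_iff_of_lt_of_lt (by linarith [hφ.1, hψ.2])
    (by linarith [hφ.2, hψ.1])).1 hcos)

lemma injOn_radialPoint (hX : IsCompact X) (h0 : X ∈ nhds 0) (a : ℝ) :
    InjOn (radialPoint X) (Ioc a (a + 2 * π)) := by
  intro φ hφ ψ hψ h
  have hray : SameRay ℝ (needleDir φ) (needleDir ψ) := by
    have hφpos := inv_pos.2 (gauge_needleDir_pos hX h0 φ)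
    have hψpos := inv_pos.2 (gauge_needleDir_pos hX h0 ψ)
    exact Or.inr (Or.inr ⟨_, _, hφpos, hψpos, h⟩)
  exact injOn_needleDir a hφ hψ (hray.eq_of_norm_eq (by simp))

lemma supportFun_le_supportFun_radialPoint (hX : IsCompact X) (hconv : Convex ℝ X)
    (h0 : X ∈ nhds 0) (θ : ℝ) :
    supportFun X θ ≤ supportFun (radialPoint X '' Icc 0 (2 * π)) θ := by
  obtain ⟨x, hx, hxθ⟩ := exists_inner_eq_supportFun hX ⟨0, mem_of_mem_nhds h0⟩ θ
  obtain ⟨φ, hφ⟩ := exists_eq_norm_smul_needleDir x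
  have hgauge : gauge X x • radialPoint X φ = x := by
    have hpos := gauge_needleDir_pos hX h0 φ
    conv_lhs => rw [hφ]
    rw [gauge_smul_of_nonneg (norm_nonneg x), radialPoint, smul_smul, smul_eq_mul,
      mul_inv_cancel_right₀ hpos.ne', ← hφ]
  have hscaled : supportFun X θ = gauge X x * ⟪radialPoint X φ, needleDir θ⟫ := by
    rw [← hxθ, ← real_inner_smul_left, hgauge]
  have hpos : 0 < ⟪radialPoint X φ, needleDir θ⟫ :=
    pos_of_mul_pos_right (hscaled ▸ supportFun_pos hX h0 θ) (gauge_nonneg x)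
  obtain ⟨ψ, hψ, hφψ⟩ := (radialPoint_periodic X).exists_mem_Ico₀ Real.two_pi_pos φ
  calc supportFun X θ ≤ ⟪radialPoint X φ, needleDir θ⟫ := by
        rw [hscaled]
        exact mul_le_of_le_one_left hpos.le (gauge_le_one_of_mem hx)
    _ ≤ supportFun (radialPoint X '' Icc 0 (2 * π)) θ := by
        rw [hφψ]
        exact inner_le_supportFun
          (isCompact_Icc.image (continuous_radialPoint hX hconv h0))
          (mem_image_of_mem _ (Ico_subset_Icc_self hψ)) θ

lemma cauchyPerimeter_le_hausdorffMeasure_frontier_of_mem_nhds (hX : IsCompact X)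
    (hconv : Convex ℝ X) (h0 : X ∈ nhds 0) :
    ENNReal.ofReal (cauchyPerimeter X) ≤ μH[1] (frontier X) := by
  have hcont := continuous_radialPoint hX hconv h0
  have hinj := injOn_radialPoint hX h0 0
  rw [zero_add] at hinj
  have hcurve := cauchyPerimeter_le_of_supportFun_le_add hX (isCompact_Icc.image hcont)
    (fun θ => (supportFun_le_supportFun_radialPoint hX hconv h0 θ).trans_eq (add_zero _).symm)
  rw [mul_zero, add_zero] at hcurve
  calc ENNReal.ofReal (cauchyPerimeter X)
      ≤ ENNReal.ofReal (cauchyPerimeter (radialPoint X '' Icc 0 (2 * π))) :=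
        ENNReal.ofReal_le_ofReal hcurve
    _ ≤ eVariationOn (radialPoint X) (Icc 0 (2 * π)) :=
        cauchyPerimeter_closedCurve_le Real.two_pi_pos.le hcont.continuousOn
          (radialPoint_periodic X).eq.symm
    _ ≤ μH[1] (radialPoint X '' Ioc 0 (2 * π)) :=
        eVariationOn_le_hausdorffMeasure_image hcont.continuousOn hinj
    _ ≤ μH[1] (frontier X) :=
        measure_mono (image_subset_iff.2 fun φ _ => radialPoint_mem_frontier hX hconv h0 φ)

theorem cauchyPerimeter_le_hausdorffMeasure_frontier (hX : IsCompact X) (hconv : Convex ℝ X)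
    (hint : (interior X).Nonempty) :
    ENNReal.ofReal (cauchyPerimeter X) ≤ μH[1] (frontier X) := by
  obtain ⟨c, hc⟩ := hint
  have hfrontier : frontier (-c +ᵥ X) = -c +ᵥ frontier X :=
    ((Homeomorph.addLeft (-c)).image_frontier X).symm
  rw [← cauchyPerimeter_vadd hX ⟨c, interior_subset hc⟩ (-c),
    ← hausdorffMeasure_vadd (-c) (Or.inl zero_le_one), ← hfrontier]
  exact cauchyPerimeter_le_hausdorffMeasure_frontier_of_mem_nhds (hX.vadd _) (hconv.vadd _)
    (neg_vadd_mem_nhds_zero hc)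

end Radial

/-! ### Needles leaving a convex body -/

section Translate

variable {I : Set ℝ} {l : ℝ}

lemma volume_mem_and_add_notMem_le (hI : IsCompact I) (hconn : I.OrdConnected) (hl : 0 ≤ l) :
    volume {t | t ∈ I ∧ t + l ∉ I} ≤ ENNReal.ofReal l := by
  rcases I.eq_empty_or_nonempty with rfl | hne
  · simp
  have hsub : {t | t ∈ I ∧ t + l ∉ I} ⊆ Ioc (sSup I - l) (sSup I) := fun t ht => by
    refine ⟨?_, le_csSup hI.bddAbove ht.1⟩
    by_contra! hle
    exact ht.2 (hconn.out ht.1 (hI.sSup_mem hne) ⟨by linarith, by linarith⟩)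
  refine (measure_mono hsub).trans_eq ?_
  rw [Real.volume_Ioc, sub_sub_cancel]

lemma le_volume_mem_and_add_notMem (hI : IsCompact I) (hconn : I.OrdConnected) {t : ℝ}
    (ht : t ∈ I) (htl : t + l ∈ I) : ENNReal.ofReal l ≤ volume {t | t ∈ I ∧ t + l ∉ I} := by
  have hsub : Ioc (sSup I - l) (sSup I) ⊆ {t | t ∈ I ∧ t + l ∉ I} := fun s hs => by
    refine ⟨hconn.out ht (hI.sSup_mem ⟨t, ht⟩) ⟨?_, hs.2⟩, fun hsl => ?_⟩
    · linarith [hs.1, le_csSup hI.bddAbove htl]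
    · linarith [hs.1, le_csSup hI.bddAbove hsl]
  refine le_of_eq_of_le ?_ (measure_mono hsub)
  rw [Real.volume_Ioc, sub_sub_cancel]

end Translate

section Exit

variable {X : Set Plane} {l : ℝ}

/-- The points of `X` from which the needle of length `l` in direction `θ` leaves `X`. -/
def exitSet (X : Set Plane) (l θ : ℝ) : Set Plane :=
  {x | x ∈ X ∧ x + l • needleDir θ ∉ X}

/-- The chord of `X` perpendicular to `needleDir θ` at signed distance `s` from the origin,
parametrised by arc length. -/
def chord (X : Set Plane) (θ s : ℝ) : Set ℝ :=
  {t | rotatedFrame θ (s, t) ∈ X}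

lemma exitSet_periodic (X : Set Plane) (l : ℝ) : Function.Periodic (exitSet X l) (2 * π) :=
  fun θ => by simp only [exitSet, needleDir_periodic θ]

lemma measurableSet_mem_exitSet (hX : IsCompact X) (l : ℝ) :
    MeasurableSet {p : ℝ × Plane | p.2 ∈ exitSet X l p.1} :=
  (hX.isClosed.preimage continuous_snd).measurableSet.inter
    (hX.isClosed.preimage (f := fun p : ℝ × Plane => p.2 + l • needleDir p.1)
      (by fun_prop)).measurableSet.compl

lemma isCompact_chord (hX : IsCompact X) (θ s : ℝ) : IsCompact (chord X θ s) := by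
  refine (hX.image (f := fun x => ⟪x, needleDir (θ + π / 2)⟫) (by fun_prop)).of_isClosed_subset
    (hX.isClosed.preimage (by fun_prop)) fun t ht => ⟨_, ht, ?_⟩
  simp [inner_rotatedFrame]

lemma ordConnected_chord (hconv : Convex ℝ X) (θ s : ℝ) : (chord X θ s).OrdConnected := by
  have hline : chord X θ s =
      (fun t : ℝ => t • needleDir (θ + π / 2)) ⁻¹' (-(s • needleDir θ) +ᵥ X) := by
    ext t
    simp [chord, rotatedFrame, mem_vadd_set_iff_neg_vadd_mem]
  rw [hline]
  exact ((hconv.vadd _).is_linear_preimage (IsLinearMap.isLinearMap_smul' _)).ordConnected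

lemma add_mem_chord_iff (θ s t : ℝ) :
    t + l ∈ chord X θ s ↔ rotatedFrame θ (s, t) + l • needleDir (θ + π / 2) ∈ X := by
  rw [chord, mem_ofPred_eq, rotatedFrame, rotatedFrame, add_smul, add_assoc]

lemma volume_exitSet (hX : IsCompact X) (l θ : ℝ) : volume (exitSet X l (θ + π / 2)) =
    ∫⁻ s, volume {t | t ∈ chord X θ s ∧ t + l ∉ chord X θ s} := by
  have hmeas : MeasurableSet (exitSet X l (θ + π / 2)) :=
    measurable_prodMk_left (measurableSet_mem_exitSet hX l)
  rw [volume_eq_lintegral_rotatedFrame θ hmeas]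
  simp only [add_mem_chord_iff]
  rfl

lemma volume_exitSet_le (hX : IsCompact X) (hconv : Convex ℝ X) (hl : 0 ≤ l) (θ : ℝ) :
    volume (exitSet X l (θ + π / 2)) ≤ ENNReal.ofReal (l * width X θ) := by
  have hchord : ∀ s, volume {t | t ∈ chord X θ s ∧ t + l ∉ chord X θ s} ≤
      (Icc (-supportFun X (θ + π)) (supportFun X θ)).indicator (fun _ => ENNReal.ofReal l) s := by
    intro s
    by_cases hs : s ∈ Icc (-supportFun X (θ + π)) (supportFun X θ)
    · rw [indicator_of_mem hs]
      exact volume_mem_and_add_notMem_le (isCompact_chord hX θ s) (ordConnected_chord hconv θ s) hl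
    · rw [indicator_of_notMem hs]
      refine (measure_mono_null (fun t ht => hs ?_) measure_empty).le
      have hright := inner_le_supportFun hX ht.1 θ
      have hleft := inner_le_supportFun hX ht.1 (θ + π)
      rw [needleDir_add_pi, inner_neg_right] at hleft
      simp only [inner_rotatedFrame, sub_self, Real.cos_zero, Real.sin_zero, mul_one, mul_zero,
        sub_zero] at hright hleft
      exact ⟨neg_le.1 hleft, hright⟩
  rw [volume_exitSet hX]
  refine (lintegral_mono hchord).trans_eq ?_
  rw [lintegral_indicator measurableSet_Icc, setLIntegral_const, Real.volume_Icc,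
    ENNReal.ofReal_mul hl, sub_neg_eq_add, width]

-- Shrinking `X` by the factor `1 - τ` towards `c` leaves room for chords of length `2 τ r`.
lemma exists_chord_of_closedBall_subset (hconv : Convex ℝ X) {c : Plane} {r τ : ℝ} (hr : 0 ≤ r)
    (hball : closedBall c r ⊆ X) (hτ : τ ∈ Icc (0 : ℝ) 1) {y : Plane} (hy : y ∈ X) (θ : ℝ) :
    ∃ t, t ∈ chord X θ ⟪(1 - τ) • y + τ • c, needleDir θ⟫ ∧
      t + 2 * τ * r ∈ chord X θ ⟪(1 - τ) • y + τ • c, needleDir θ⟫ := by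
  have hmem : ∀ ρ : ℝ, |ρ| = r →
      (1 - τ) • y + τ • c + (τ * ρ) • needleDir (θ + π / 2) ∈ X := fun ρ hρ => by
    have hpoint : c + ρ • needleDir (θ + π / 2) ∈ X := hball (by simp [norm_smul, hρ])
    convert hconv hy hpoint (sub_nonneg.2 hτ.2) hτ.1 (sub_add_cancel _ _) using 1
    module
  set z := (1 - τ) • y + τ • c
  have hframe : ∀ a : ℝ, rotatedFrame θ (⟪z, needleDir θ⟫, ⟪z, needleDir (θ + π / 2)⟫ + a) =
      z + a • needleDir (θ + π / 2) := fun a => by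
    conv_rhs => rw [← rotatedFrame_inner θ z]
    simp only [rotatedFrame, add_smul, add_assoc]
  refine ⟨⟪z, needleDir (θ + π / 2)⟫ + τ * -r, ?_, ?_⟩
  · rw [chord, mem_ofPred_eq, hframe]
    exact hmem (-r) (by rw [abs_neg, abs_of_nonneg hr])
  · rw [chord, mem_ofPred_eq, add_assoc, show τ * -r + 2 * τ * r = τ * r by ring, hframe]
    exact hmem r (abs_of_nonneg hr)

lemma exists_inner_eq_of_mem_Icc (hX : IsCompact X) (hconv : Convex ℝ X) (hne : X.Nonempty)
    {θ s : ℝ} (hs : s ∈ Icc (-supportFun X (θ + π)) (supportFun X θ)) :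
    ∃ y ∈ X, ⟪y, needleDir θ⟫ = s := by
  obtain ⟨x, hx, hxθ⟩ := exists_inner_eq_supportFun hX hne θ
  obtain ⟨x', hx', hx'θ⟩ := exists_inner_eq_supportFun hX hne (θ + π)
  rw [needleDir_add_pi, inner_neg_right] at hx'θ
  refine hconv.isPreconnected.intermediate_value hx' hx (f := fun y => ⟪y, needleDir θ⟫)
    (by fun_prop) ?_
  rwa [hxθ, ← neg_neg ⟪x', needleDir θ⟫, hx'θ]

lemma le_volume_exitSet (hX : IsCompact X) (hconv : Convex ℝ X) {c : Plane} {r : ℝ}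
    (hr : 0 < r) (hball : closedBall c r ⊆ X) (hl : l ∈ Ico 0 (2 * r)) (θ : ℝ) :
    ENNReal.ofReal (l * (1 - l / (2 * r)) * width X θ) ≤ volume (exitSet X l (θ + π / 2)) := by
  set τ := l / (2 * r) with hτ_def
  have hτ0 : 0 ≤ τ := div_nonneg hl.1 (by positivity)
  have hτ1 : 0 < 1 - τ := sub_pos.2 ((div_lt_one (by positivity)).2 hl.2)
  have hlτ : l = 2 * τ * r := by rw [hτ_def]; field_simp
  have hchord : ∀ s ∈ Icc (τ * ⟪c, needleDir θ⟫ - (1 - τ) * supportFun X (θ + π))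
      (τ * ⟪c, needleDir θ⟫ + (1 - τ) * supportFun X θ),
      ENNReal.ofReal l ≤ volume {t | t ∈ chord X θ s ∧ t + l ∉ chord X θ s} := fun s hs => by
    obtain ⟨y, hy, hys⟩ := exists_inner_eq_of_mem_Icc hX hconv
      ⟨c, hball (mem_closedBall_self hr.le)⟩ (θ := θ) (s := (s - τ * ⟪c, needleDir θ⟫) / (1 - τ))
      ⟨by rw [le_div_iff₀ hτ1]; linarith [hs.1], by rw [div_le_iff₀ hτ1]; linarith [hs.2]⟩
    have hs' : ⟪(1 - τ) • y + τ • c, needleDir θ⟫ = s := by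
      rw [inner_add_left, real_inner_smul_left, real_inner_smul_left, hys,
        mul_div_cancel₀ _ hτ1.ne', sub_add_cancel]
    obtain ⟨t, ht, htl⟩ := exists_chord_of_closedBall_subset hconv hr.le hball
      ⟨hτ0, sub_nonneg.1 hτ1.le⟩ hy θ
    rw [hs'] at ht htl
    rw [← hlτ] at htl
    exact le_volume_mem_and_add_notMem (isCompact_chord hX θ s) (ordConnected_chord hconv θ s)
      ht htl
  rw [volume_exitSet hX]
  refine le_trans (le_of_eq ?_)
    ((setLIntegral_mono' measurableSet_Icc hchord).trans (setLIntegral_le_lintegral _ _))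
  rw [setLIntegral_const, Real.volume_Icc, ← ENNReal.ofReal_mul hl.1, width]
  ring_nf

end Exit

/-! ### Buffon probabilities of short needles -/

section Buffon

lemma integral_measureReal_prodMk_swap {α β : Type*} [MeasurableSpace α] [MeasurableSpace β]
    (μ : Measure α) (ν : Measure β) [IsFiniteMeasure μ] [IsFiniteMeasure ν] {S : Set (α × β)}
    (hS : MeasurableSet S) :
    ∫ x, ν.real (Prod.mk x ⁻¹' S) ∂μ = ∫ y, μ.real ((fun x => (x, y)) ⁻¹' S) ∂ν := by
  simp only [measureReal_def]
  rw [integral_toReal (measurable_measure_prodMk_left hS).aemeasurable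
      (.of_forall fun _ => measure_lt_top _ _),
    integral_toReal (measurable_measure_prodMk_right hS).aemeasurable
      (.of_forall fun _ => measure_lt_top _ _),
    ← Measure.prod_apply hS, ← Measure.prod_apply_symm hS]

variable {X : Set Plane} {l : ℝ}

lemma intervalIntegrable_volume_exitSet (hX : IsCompact X) (l c a b : ℝ) :
    IntervalIntegrable (fun θ => volume.real (exitSet X l (θ + c))) volume a b := by
  have := isFiniteMeasure_restrict.2 (hX.measure_ne_top (μ := volume))
  have : IsFiniteMeasure (volume.restrict (uIoc a b)) :=
    isFiniteMeasure_restrict.2 measure_Ioc_lt_top.ne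
  have hmeas : MeasurableSet {p : ℝ × Plane | p.2 ∈ exitSet X l (p.1 + c)} :=
    (by fun_prop : Measurable fun p : ℝ × Plane => (p.1 + c, p.2))
      (measurableSet_mem_exitSet hX l)
  have hfiber := Measure.integrable_measure_prodMk_left (μ := volume.restrict (uIoc a b))
    (ν := volume.restrict X) hmeas (measure_ne_top _ _)
  rw [intervalIntegrable_iff]
  refine hfiber.congr (.of_forall fun θ => ?_)
  simp only
  rw [measureReal_restrict_apply' hX.measurableSet]
  exact congrArg volume.real (inter_eq_left.2 fun x hx => hx.1)

lemma integral_volume_needleAngles (hX : IsCompact X) (l : ℝ) :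
    ∫ x in X, volume.real (needleAngles X l x) =
      ∫ θ in (0)..(2 * π), (volume.real X - volume.real (exitSet X l θ)) := by
  have := isFiniteMeasure_restrict.2 (hX.measure_ne_top (μ := volume))
  have hS : MeasurableSet {p : ℝ × Plane | p.2 + l • needleDir p.1 ∈ X} :=
    (hX.isClosed.preimage (by fun_prop)).measurableSet
  have hswap := integral_measureReal_prodMk_swap (volume.restrict (Ico 0 (2 * π)))
    (volume.restrict X) hS
  rw [intervalIntegral.integral_of_le Real.two_pi_pos.le, ← integral_Ico_eq_integral_Ioc]
  convert hswap.symm using 1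
  · refine integral_congr_ae (.of_forall fun x => ?_)
    simp only
    rw [measureReal_restrict_apply' measurableSet_Ico, inter_comm]
    rfl
  · refine integral_congr_ae (.of_forall fun θ => ?_)
    simp only
    rw [measureReal_restrict_apply' hX.measurableSet, inter_comm, sub_eq_iff_eq_add]
    exact (measureReal_inter_add_sdiff (measurable_prodMk_left hS) hX.measure_ne_top).symm

lemma buffonProb_eq (hX : IsCompact X) (hA : volume X ≠ 0) (l : ℝ) :
    buffonProb X l = 1 - (∫ θ in (0)..(2 * π), volume.real (exitSet X l (θ + π / 2))) /
      (2 * π * volume.real X) := by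
  have hA' : volume.real X ≠ 0 := (measureReal_ne_zero_iff hX.measure_ne_top).2 hA
  have hangles := integral_volume_needleAngles hX l
  have hper : Function.Periodic (fun θ => volume.real X - volume.real (exitSet X l θ)) (2 * π) :=
    fun θ => by simp only [exitSet_periodic X l θ]
  rw [← intervalIntegral_comp_add_right_of_periodic hper (π / 2), intervalIntegral.integral_sub
    intervalIntegrable_const (intervalIntegrable_volume_exitSet hX l _ _ _),
    intervalIntegral.integral_const, sub_zero, smul_eq_mul] at hangles
  simp only [measureReal_def] at hangles hA' ⊢
  rw [buffonProb, if_neg hA, hangles]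
  field_simp

lemma volume_exitSet_lt_top (hX : IsCompact X) (l θ : ℝ) : volume (exitSet X l θ) < ⊤ :=
  (measure_mono fun _ hx => hx.1).trans_lt hX.measure_lt_top

theorem le_buffonProb (hX : IsCompact X) (hconv : Convex ℝ X) (hA : volume X ≠ 0) (hl : 0 ≤ l) :
    1 - l * cauchyPerimeter X / (π * volume.real X) ≤ buffonProb X l := by
  have hwidth := continuous_width hX
  have hexit : ∫ θ in (0)..(2 * π), volume.real (exitSet X l (θ + π / 2)) ≤
      ∫ θ in (0)..(2 * π), l * width X θ :=
    intervalIntegral.integral_mono Real.two_pi_pos.le (intervalIntegrable_volume_exitSet hX l _ _ _)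
      (Continuous.intervalIntegrable (by fun_prop) _ _) fun θ =>
        ENNReal.toReal_le_of_le_ofReal (mul_nonneg hl (width_nonneg hX θ))
          (volume_exitSet_le hX hconv hl θ)
  rw [intervalIntegral.integral_const_mul, integral_width hX] at hexit
  rw [buffonProb_eq hX hA]
  calc 1 - l * cauchyPerimeter X / (π * volume.real X)
      = 1 - l * (2 * cauchyPerimeter X) / (2 * π * volume.real X) := by
        rw [mul_left_comm l, mul_assoc 2 π, mul_div_mul_left _ _ two_ne_zero]
    _ ≤ _ := by gcongr

theorem buffonProb_le (hX : IsCompact X) (hconv : Convex ℝ X) {c : Plane} {r : ℝ} (hr : 0 < r)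
    (hball : closedBall c r ⊆ X) (hl : l ∈ Ico 0 (2 * r)) :
    buffonProb X l ≤ 1 - l * (1 - l / (2 * r)) * cauchyPerimeter X / (π * volume.real X) := by
  have hwidth := continuous_width hX
  have hA : volume X ≠ 0 :=
    ((measure_closedBall_pos volume c hr).trans_le (measure_mono hball)).ne'
  have hexit : ∫ θ in (0)..(2 * π), l * (1 - l / (2 * r)) * width X θ ≤
      ∫ θ in (0)..(2 * π), volume.real (exitSet X l (θ + π / 2)) :=
    intervalIntegral.integral_mono Real.two_pi_pos.le
      (Continuous.intervalIntegrable (by fun_prop) _ _)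
      (intervalIntegrable_volume_exitSet hX l _ _ _) fun θ =>
        (ENNReal.ofReal_le_iff_le_toReal (volume_exitSet_lt_top hX l _).ne).1
          (le_volume_exitSet hX hconv hr hball hl θ)
  rw [intervalIntegral.integral_const_mul, integral_width hX] at hexit
  rw [buffonProb_eq hX hA]
  calc _ ≤ 1 - l * (1 - l / (2 * r)) * (2 * cauchyPerimeter X) / (2 * π * volume.real X) := by
        gcongr
    _ = 1 - l * (1 - l / (2 * r)) * cauchyPerimeter X / (π * volume.real X) := by
        rw [mul_left_comm _ 2, mul_assoc 2 π, mul_div_mul_left _ _ two_ne_zero]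

lemma le_buffonProb_closedBall (c : Plane) {R : ℝ} (hR : 0 < R) (hl : 0 ≤ l) :
    1 - 2 * l / (π * R) ≤ buffonProb (closedBall c R) l := by
  have hbound := le_buffonProb (isCompact_closedBall c R) (convex_closedBall c R)
    (measure_closedBall_pos volume c hR).ne' hl
  have hvol : volume.real (closedBall c R) = R ^ 2 * π := by
    rw [measureReal_def, EuclideanSpace.volume_closedBall_fin_two]
    simp [hR.le, Real.pi_pos.le]
  rw [cauchyPerimeter_closedBall c hR.le, hvol] at hbound
  refine le_of_eq_of_le ?_ hbound
  field_simp

end Buffon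

section Comparison

variable {X : Set Plane}

lemma exists_buffonProb_lt_of_two_mul_volume_lt (hX : IsCompact X) (hconv : Convex ℝ X)
    (hint : (interior X).Nonempty) {R : ℝ} (hR : 0 < R)
    (hratio : 2 * volume.real X < R * cauchyPerimeter X) :
    ∃ ε > 0, ∀ l, 0 < l → l < ε → buffonProb X l < 1 - 2 * l / (π * R) := by
  obtain ⟨c, hc⟩ := hint
  obtain ⟨r, hr, hball⟩ := Metric.nhds_basis_closedBall.mem_iff.1 (mem_interior_iff_mem_nhds.1 hc)
  have hA : 0 < volume.real X := measureReal_nonneg.lt_of_ne' <|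
    (measureReal_ne_zero_iff hX.measure_ne_top).2
      ((measure_closedBall_pos volume c hr).trans_le (measure_mono hball)).ne'
  set L := cauchyPerimeter X
  have hL : 0 < R * L := (mul_pos two_pos hA).trans hratio
  have hgap : 0 < 1 - 2 * volume.real X / (R * L) := sub_pos.2 ((div_lt_one hL).2 hratio)
  refine ⟨2 * r * (1 - 2 * volume.real X / (R * L)), by positivity, fun l hl hlε => ?_⟩
  have hfactor : 2 * volume.real X / (R * L) < 1 - l / (2 * r) := by
    rw [lt_sub_comm, div_lt_iff₀' (by positivity)]
    exact hlε
  have hl2r : l < 2 * r :=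
    hlε.trans_le (mul_le_of_le_one_right (by positivity) (sub_le_self _ (by positivity)))
  refine (buffonProb_le hX hconv hr hball ⟨hl.le, hl2r⟩).trans_lt (sub_lt_sub_left ?_ 1)
  rw [div_lt_iff₀ hL] at hfactor
  rw [div_lt_div_iff₀ (by positivity) (by positivity)]
  calc 2 * l * (π * volume.real X) = l * π * (2 * volume.real X) := by ring
    _ < l * π * ((1 - l / (2 * r)) * (R * L)) := by gcongr
    _ = l * (1 - l / (2 * r)) * L * (π * R) := by ring

theorem buffonProb_lt_unitDisk_general (hX : IsCompact X) (hconv : Convex ℝ X) (c : Plane) {R : ℝ}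
    (hR : 0 < R) (hper : μH[1] (frontier X) ≤ ENNReal.ofReal (2 * π * R))
    (hnd : ¬∃ (c : Plane) (r : ℝ), X = closedBall c r) :
    ∃ ε > 0, ∀ l : ℝ, 0 < l → l < ε → buffonProb X l < buffonProb (closedBall c R) l := by
  suffices ∃ ε > 0, ∀ l : ℝ, 0 < l → l < ε → buffonProb X l < 1 - 2 * l / (π * R) by
    obtain ⟨ε, hε, hlt⟩ := this
    exact ⟨ε, hε, fun l hl hlε => (hlt l hl hlε).trans_le (le_buffonProb_closedBall c hR hl.le)⟩
  rcases (interior X).eq_empty_or_nonempty with hint | hint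
  · have hnull : volume X = 0 := measure_mono_null
      (by rw [hX.isClosed.frontier_eq, hint, sdiff_empty]) (hconv.addHaar_frontier volume)
    refine ⟨π * R / 2, by positivity, fun l _ hlε => ?_⟩
    rw [buffonProb, if_pos hnull, sub_pos, div_lt_one (by positivity)]
    linarith
  · refine exists_buffonProb_lt_of_two_mul_volume_lt hX hconv hint hR ?_
    have hiso := four_pi_mul_volume_lt_sq_cauchyPerimeter hX hconv hint hnd
    have hL : cauchyPerimeter X ≤ 2 * π * R := (ENNReal.ofReal_le_ofReal_iff (by positivity)).1
      ((cauchyPerimeter_le_hausdorffMeasure_frontier hX hconv hint).trans hper)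
    have hnonneg := cauchyPerimeter_nonneg hX
    refine lt_of_mul_lt_mul_left ?_ Real.two_pi_pos.le
    calc 2 * π * (2 * volume.real X) = 4 * π * volume.real X := by ring
      _ < cauchyPerimeter X * cauchyPerimeter X := by rwa [← sq]
      _ ≤ 2 * π * R * cauchyPerimeter X := by gcongr
      _ = 2 * π * (R * cauchyPerimeter X) := by ring

end Comparison

/-- Main theorem: among compact convex sets of perimeter `2π`, any
non-disk has strictly smaller Buffon probability than the unit disk for all
sufficiently short needles. -/
theorem buffonProb_lt_unitDisk (X : Set Plane) (hXc : IsCompact X) (hXconv : Convex ℝ X)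
    (hper : μH[1] (frontier X) = ENNReal.ofReal (2 * π))
    (hnd : ¬∃ (c : Plane) (r : ℝ), X = Metric.closedBall c r) :
    ∃ ε > 0, ∀ l : ℝ, 0 < l → l < ε →
      buffonProb X l < buffonProb (Metric.closedBall (0 : Plane) 1) l :=
  buffonProb_lt_unitDisk_general hXc hXconv 0 one_pos (by rw [hper, mul_one]) hnd
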